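/- arXiv:2512.02149 — 9 statements merged into one kernel-verified Lean document; each statement's English description precedes it below -/
import Mathlib

section
/- Let k ≥ 1 and let x ∈ R^k be nonzero with valuation ν(x) = j. Then x·v ∈ ⟨γ^j⟩ for every v ∈ R^k, and for every a ∈ ⟨γ^j⟩ the number of v ∈ R^k with x·v = a equals q^(j+s(k−1)). In particular every nonzero codeword of S_k^α takes each value of the ideal ⟨γ^j⟩ equally often, namely q^(j+s(k−1)) times. -/
namespace ChainRing

variable {R : Type*} [CommRing R]

/-- The image of multiplication by `c` is the principal ideal generated by `c`. -/
lemma range_mulLeft (c : R) :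
    (AddMonoidHom.mulLeft c).range = (Ideal.span {c} : Ideal R).toAddSubgroup := by
  ext y
  simp [Ideal.mem_span_singleton', mul_comm]

variable [IsLocalRing R] {γ : R}

/-- In a local ring with maximal ideal `⟨γ⟩`, if `γ ^ j ≠ 0` then `γ ^ (j + 1) ∣ γ ^ j * r` exactly
when `γ ∣ r`. -/
lemma comap_mulLeft_span_pow_succ (hmax : IsLocalRing.maximalIdeal R = Ideal.span {γ})
    {j : ℕ} (hj : γ ^ j ≠ 0) :
    (Ideal.span {γ ^ (j + 1)} : Ideal R).toAddSubgroup.comap (AddMonoidHom.mulLeft (γ ^ j)) =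
      (Ideal.span {γ} : Ideal R).toAddSubgroup := by
  ext r
  simp only [AddSubgroup.mem_comap, AddMonoidHom.coe_mulLeft, Submodule.mem_toAddSubgroup,
    Ideal.mem_span_singleton]
  constructor
  · rintro ⟨t, ht⟩
    have hzero : γ ^ j * (r - γ * t) = 0 := by rw [mul_sub, ht]; ring
    have hmem : r - γ * t ∈ IsLocalRing.maximalIdeal R := by
      rw [IsLocalRing.mem_maximalIdeal, mem_nonunits_iff]
      exact fun hu => hj (hu.mul_left_eq_zero.mp hzero)
    rw [hmax, Ideal.mem_span_singleton] at hmem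
    simpa using hmem.add (dvd_mul_right γ t)
  · rintro ⟨t, rfl⟩
    exact ⟨t, by ring⟩

/-- In a local ring with maximal ideal `⟨γ⟩`, the ideal `⟨γ ^ j⟩` has index `q ^ j`, where `q` is
the size of the residue field, as long as `γ ^ i ≠ 0` for `i < j`. -/
lemma index_span_pow (hmax : IsLocalRing.maximalIdeal R = Ideal.span {γ})
    (j : ℕ) (hj : ∀ i < j, γ ^ i ≠ 0) :
    (Ideal.span {γ ^ j} : Ideal R).toAddSubgroup.index =
      Nat.card (R ⧸ Ideal.span ({γ} : Set R)) ^ j := by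
  induction j with
  | zero => simp
  | succ j ih =>
    have hle : (Ideal.span {γ ^ (j + 1)} : Ideal R).toAddSubgroup ≤
        (Ideal.span {γ ^ j} : Ideal R).toAddSubgroup := by
      rw [Submodule.toAddSubgroup_le, Ideal.span_singleton_le_span_singleton]
      exact pow_dvd_pow γ j.le_succ
    rw [← AddSubgroup.relIndex_mul_index hle, ih fun i hi => hj i (hi.trans j.lt_succ_self),
      ← range_mulLeft (γ ^ j), ← AddSubgroup.index_comap,
      comap_mulLeft_span_pow_succ hmax (hj j j.lt_succ_self), pow_succ']
    rfl

/-- An element of `⟨γ ^ j⟩` outside `⟨γ ^ (j + 1)⟩` is associated to `γ ^ j`. -/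
lemma associated_pow_of_mem_of_notMem (hmax : IsLocalRing.maximalIdeal R = Ideal.span {γ})
    {j : ℕ} {y : R} (hy : y ∈ Ideal.span ({γ ^ j} : Set R))
    (hy' : y ∉ Ideal.span ({γ ^ (j + 1)} : Set R)) : Associated (γ ^ j) y := by
  obtain ⟨u, rfl⟩ := Ideal.mem_span_singleton.mp hy
  suffices hu : IsUnit u from ⟨hu.unit, rfl⟩
  by_contra hu
  have hmem : u ∈ IsLocalRing.maximalIdeal R := hu
  rw [hmax, Ideal.mem_span_singleton] at hmem
  exact hy' (Ideal.mem_span_singleton.mpr (pow_succ γ j ▸ mul_dvd_mul_left _ hmem))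

end ChainRing

/-- All fibers over the image of a homomorphism `f : G →+ H` of finite groups have
`|G| * [H : f(G)] / |H|` elements. -/
lemma AddMonoidHom.card_fiber_mul_card {G H : Type*} [AddGroup G] [AddGroup H] (f : G →+ H)
    {a : H} (ha : a ∈ f.range) :
    Nat.card {v // f v = a} * Nat.card H = Nat.card G * f.range.index := by
  obtain ⟨v, rfl⟩ := ha
  have hfiber : Nat.card {w // f w = f v} = Nat.card f.ker :=
    Nat.card_congr (f.fiberEquivKer v)
  rw [hfiber, ← f.range.card_mul_index, ← mul_assoc, ← AddSubgroup.index_ker,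
    AddSubgroup.card_mul_index]

/-- If `x ∈ R^k` is nonzero with valuation `ν(x) = j`, then `x·v ∈ ⟨γ^j⟩` for
all `v`, and for every `a ∈ ⟨γ^j⟩` the number of `v ∈ R^k` with `x·v = a` is
`q^(j+s(k−1))`. -/
theorem stmt_1
    (R : Type) [CommRing R] [IsLocalRing R] [Fintype R]
    (γ : R) (s q : ℕ)
    (hs : 1 ≤ s)
    (hmax : IsLocalRing.maximalIdeal R = Ideal.span {γ})
    (hnil : γ ^ s = 0)
    (hnil' : 2 ≤ s → γ ^ (s - 1) ≠ 0)
    (hq : Nat.card (R ⧸ Ideal.span ({γ} : Set R)) = q)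
    (k : ℕ) (hk : 1 ≤ k)
    (j : ℕ) (hj : j < s)
    (x : Fin k → R) (hx : x ≠ 0)
    (hval1 : ∀ i, x i ∈ Ideal.span ({γ ^ j} : Set R))
    (hval2 : ∃ i, x i ∉ Ideal.span ({γ ^ (j + 1)} : Set R)) :
    (∀ v : Fin k → R, (∑ i, x i * v i) ∈ Ideal.span ({γ ^ j} : Set R)) ∧
    (∀ a ∈ Ideal.span ({γ ^ j} : Set R),
      Nat.card {v : Fin k → R // ∑ i, x i * v i = a} = q ^ (j + s * (k - 1))) := by
  have hdot : ∀ v : Fin k → R, (∑ i, x i * v i) ∈ Ideal.span ({γ ^ j} : Set R) :=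
    fun v => Ideal.sum_mem _ fun i _ => Ideal.mul_mem_right _ _ (hval1 i)
  refine ⟨hdot, fun a ha => ?_⟩
  have hpow : ∀ i < s, γ ^ i ≠ 0 := by
    intro i hi h0
    rcases Nat.lt_or_ge s 2 with h | h
    · obtain rfl : i = 0 := by omega
      simp at h0
    · exact hnil' h (pow_eq_zero_of_le (by omega) h0)
  let f : (Fin k → R) →+ R :=
    { toFun := fun v => ∑ i, x i * v i
      map_zero' := by simp
      map_add' := fun v w => by simp [mul_add, Finset.sum_add_distrib] }
  have hrange : f.range = (Ideal.span {γ ^ j} : Ideal R).toAddSubgroup := by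
    refine le_antisymm ?_ fun y hy => ?_
    · rintro _ ⟨v, rfl⟩
      exact hdot v
    · obtain ⟨i, hi⟩ := hval2
      have hxi := ChainRing.associated_pow_of_mem_of_notMem hmax (hval1 i) hi
      obtain ⟨t, rfl⟩ := hxi.dvd'.trans (Ideal.mem_span_singleton.mp hy)
      exact ⟨Pi.single i t, by simp [f, Pi.single_apply]⟩
  have hcard : Nat.card R = q ^ s := by
    have h := ChainRing.index_span_pow hmax s hpow
    rw [hnil, hq] at h
    simpa using h
  have hindex : f.range.index = q ^ j := by
    rw [hrange, ChainRing.index_span_pow hmax j fun i hi => hpow i (hi.trans hj), hq]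
  have hfiber := f.card_fiber_mul_card (hrange ▸ ha : a ∈ f.range)
  have hpos : 0 < q ^ s := hcard ▸ Nat.card_pos
  refine Nat.eq_of_mul_eq_mul_right hpos ?_
  rw [Nat.card_fun, Nat.card_fin, hindex, hcard] at hfiber
  refine hfiber.trans ?_
  obtain ⟨m, rfl⟩ := Nat.exists_eq_add_of_le' hk
  rw [Nat.add_sub_cancel]
  ring
end

section
/- Let k ≥ 1 and let x ∈ R^k be nonzero with valuation ν(x) = j. Then the Hamming weight of the codeword (x·v)_{v∈R^k} of S_k^α, i.e. the number of v ∈ R^k with x·v ≠ 0, equals q^(sk) − q^(j+s(k−1)). -/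
/-- In a local ring with maximal ideal `⟨γ⟩`, the ideal `⟨γ^i⟩` has index `q^i` as long as
no earlier power of `γ` vanishes. -/
theorem index_span_pow {R : Type*} [CommRing R] [IsLocalRing R] {γ : R}
    (hmax : IsLocalRing.maximalIdeal R = Ideal.span {γ}) (i : ℕ) (hi : ∀ l < i, γ ^ l ≠ 0) :
    (Ideal.span ({γ ^ i} : Set R)).toAddSubgroup.index
      = Nat.card (R ⧸ Ideal.span ({γ} : Set R)) ^ i := by
  induction i with
  | zero =>
    simp [Ideal.span_singleton_one]
  | succ i ih =>
    have hker : (AddMonoidHom.mulLeft (γ ^ i)).ker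
        ≤ (Ideal.span ({γ} : Set R)).toAddSubgroup := by
      intro y hy
      have hy' : γ ^ i * y = 0 := hy
      change y ∈ Ideal.span ({γ} : Set R)
      rw [← hmax, IsLocalRing.mem_maximalIdeal, mem_nonunits_iff]
      intro hu
      exact hi i (Nat.lt_succ_self i) (hu.mul_left_eq_zero.mp hy')
    have hmap : (Ideal.span ({γ} : Set R)).toAddSubgroup.map (AddMonoidHom.mulLeft (γ ^ i))
        = (Ideal.span ({γ ^ (i + 1)} : Set R)).toAddSubgroup := by
      ext y
      simp only [AddSubgroup.mem_map, Submodule.mem_toAddSubgroup, Ideal.mem_span_singleton',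
        AddMonoidHom.coe_mulLeft]
      constructor
      · rintro ⟨_, ⟨a, rfl⟩, rfl⟩
        exact ⟨a, by ring⟩
      · rintro ⟨a, rfl⟩
        exact ⟨_, ⟨a, rfl⟩, by ring⟩
    have hrange : (AddMonoidHom.mulLeft (γ ^ i)).range
        = (Ideal.span ({γ ^ i} : Set R)).toAddSubgroup := by
      ext y
      simp [Ideal.mem_span_singleton', mul_comm]
    rw [← hmap, AddSubgroup.index_map, sup_eq_left.mpr hker, hrange,
      ih fun l hl => hi l (hl.trans (Nat.lt_succ_self i)), pow_succ']
    rfl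

/-- If every coordinate of `x` lies in `⟨γ^j⟩` and some coordinate does not lie in `⟨γ^(j+1)⟩`,
then the dot products with `x` are exactly the elements of `⟨γ^j⟩`. -/
theorem range_dotProduct_eq_span_pow {R ι : Type*} [CommRing R] [IsLocalRing R] [Fintype ι]
    {γ : R} (hmax : IsLocalRing.maximalIdeal R = Ideal.span {γ}) {j : ℕ} {x : ι → R}
    (hmem : ∀ i, x i ∈ Ideal.span ({γ ^ j} : Set R))
    (hnot : ∃ i, x i ∉ Ideal.span ({γ ^ (j + 1)} : Set R)) :
    LinearMap.range (dotProductBilin R R x) = Ideal.span ({γ ^ j} : Set R) := by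
  classical
  apply le_antisymm
  · rintro _ ⟨v, rfl⟩
    exact Ideal.sum_mem _ fun i _ => Ideal.mul_mem_right _ _ (hmem i)
  · rw [Ideal.span_singleton_le_iff_mem]
    obtain ⟨i, hi⟩ := hnot
    obtain ⟨a, ha⟩ := Ideal.mem_span_singleton'.mp (hmem i)
    have hu : IsUnit a := by
      by_contra hna
      have hmem_max : a ∈ IsLocalRing.maximalIdeal R := hna
      rw [hmax, Ideal.mem_span_singleton'] at hmem_max
      obtain ⟨b, rfl⟩ := hmem_max
      exact hi (Ideal.mem_span_singleton'.mpr ⟨b, by rw [← ha]; ring⟩)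
    obtain ⟨b, hb⟩ := hu.exists_right_inv
    refine ⟨Pi.single i b, ?_⟩
    simp only [dotProductBilin_apply_apply, dotProduct_single]
    rw [← ha, mul_right_comm, hb, one_mul]

/-- If `x ∈ R^k` is nonzero with valuation `ν(x) = j`, then the Hamming weight
of the codeword `(x·v)_{v∈R^k}` of `S_k^α` equals `q^(sk) − q^(j+s(k−1))`. -/
theorem stmt_2
    (R : Type) [CommRing R] [IsLocalRing R] [Fintype R]
    (γ : R) (s q : ℕ)
    (hs : 1 ≤ s)
    (hmax : IsLocalRing.maximalIdeal R = Ideal.span {γ})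
    (hnil : γ ^ s = 0)
    (hnil' : 2 ≤ s → γ ^ (s - 1) ≠ 0)
    (hq : Nat.card (R ⧸ Ideal.span ({γ} : Set R)) = q)
    (k : ℕ) (hk : 1 ≤ k)
    (j : ℕ) (hj : j < s)
    (x : Fin k → R) (hx : x ≠ 0)
    (hval1 : ∀ i, x i ∈ Ideal.span ({γ ^ j} : Set R))
    (hval2 : ∃ i, x i ∉ Ideal.span ({γ ^ (j + 1)} : Set R)) :
    Nat.card {v : Fin k → R // ∑ i, x i * v i ≠ 0}
      = q ^ (s * k) - q ^ (j + s * (k - 1)) := by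
  have hpow : ∀ l < s, γ ^ l ≠ 0 := by
    intro l hl h0
    have hlast : γ ^ (s - 1) = 0 := pow_eq_zero_of_le (Nat.le_sub_one_of_lt hl) h0
    rcases hs.lt_or_eq with h | rfl
    · exact hnil' h hlast
    · simp at hlast
  have hcardR : Nat.card R = q ^ s := by
    have h := index_span_pow hmax s hpow
    rwa [hnil, hq, Ideal.span_singleton_zero, Submodule.bot_toAddSubgroup,
      AddSubgroup.index_bot] at h
  have hqpos : 0 < q := hq ▸ Nat.card_pos
  have hcardV : Nat.card (Fin k → R) = q ^ (s * k) := by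
    rw [Nat.card_fun, hcardR, Nat.card_fin, pow_mul]
  let φ := (dotProductBilin R R x).toAddMonoidHom
  have hrange : φ.range = (Ideal.span ({γ ^ j} : Set R)).toAddSubgroup := by
    rw [← range_dotProduct_eq_span_pow hmax hval1 hval2]
    rfl
  have hcardRange : Nat.card φ.range * q ^ j = q ^ s := by
    rw [← hcardR, ← φ.range.card_mul_index, hrange,
      index_span_pow hmax j fun l hl => hpow l (hl.trans hj), hq]
  have hcardKer : Nat.card φ.ker = q ^ (j + s * (k - 1)) := by
    have h := φ.ker.card_mul_index
    rw [AddSubgroup.index_ker, hcardV] at h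
    apply Nat.eq_of_mul_eq_mul_right (pow_pos hqpos s)
    calc Nat.card φ.ker * q ^ s = Nat.card φ.ker * Nat.card φ.range * q ^ j := by
          rw [← hcardRange, mul_assoc]
      _ = q ^ (j + s * (k - 1)) * q ^ s := by
          rw [h, ← pow_add, ← pow_add]
          obtain ⟨m, rfl⟩ := Nat.exists_eq_add_of_le hk
          congr 1
          rw [Nat.add_sub_cancel_left]
          ring
  have hcompl : Nat.card {v : Fin k → R // ∑ i, x i * v i ≠ 0}
      = Nat.card (Fin k → R) - Nat.card φ.ker := by
    classical
    rw [Nat.card_eq_fintype_card, Fintype.card_subtype_compl, ← Nat.card_eq_fintype_card,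
      ← Nat.card_eq_fintype_card]
    rfl
  rw [hcompl, hcardV, hcardKer]
end

section
/- Let k ≥ 1. The minimum Hamming distance of the linear simplex α code S_k^α equals (q−1)·q^(sk−1): for every nonzero x ∈ R^k the number of v ∈ R^k with x·v ≠ 0 is at least (q−1)·q^(sk−1), and there exists a nonzero x ∈ R^k for which this number is exactly (q−1)·q^(sk−1). -/
section ChainRing

variable {R : Type*} [CommRing R]

/-- The kernel and the range of a linear map partition the cardinality of its domain. -/
theorem LinearMap.natCard_ker_mul_natCard_range {M N : Type*} [AddCommGroup M] [Module R M]
    [AddCommGroup N] [Module R N] (f : M →ₗ[R] N) :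
    Nat.card (LinearMap.ker f) * Nat.card (LinearMap.range f) = Nat.card M := by
  rw [Submodule.card_eq_card_quotient_mul_card (LinearMap.ker f),
    Nat.card_congr f.quotKerEquivRange.toEquiv]

variable [IsLocalRing R]

/-- Below the nilpotency index, `γ ^ j * r` lies in `⟨γ ^ (j + 1)⟩` only for `r ∈ ⟨γ⟩`. -/
theorem IsLocalRing.pow_succ_dvd_pow_mul_iff {γ : R}
    (hmax : IsLocalRing.maximalIdeal R = Ideal.span {γ}) {j : ℕ} (hj : γ ^ j ≠ 0) (r : R) :
    γ ^ (j + 1) ∣ γ ^ j * r ↔ γ ∣ r := by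
  constructor
  · rintro ⟨c, hc⟩
    rw [← Ideal.mem_span_singleton, ← hmax, IsLocalRing.mem_maximalIdeal, mem_nonunits_iff]
    intro hr
    have hγ : γ ∈ IsLocalRing.maximalIdeal R := hmax ▸ Ideal.mem_span_singleton_self γ
    have hu : IsUnit (r - γ * c) := by
      by_contra h
      have h' : r - γ * c ∈ IsLocalRing.maximalIdeal R := h
      have := Ideal.add_mem _ h' (Ideal.mul_mem_right c _ hγ)
      rw [sub_add_cancel] at this
      exact this hr
    apply hj
    rw [← hu.mul_left_eq_zero]
    linear_combination hc
  · rintro ⟨c, rfl⟩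
    exact ⟨c, by ring⟩

theorem IsLocalRing.natCard_quotient_span_pow {γ : R}
    (hmax : IsLocalRing.maximalIdeal R = Ideal.span {γ}) (j : ℕ)
    (hj : ∀ i < j, γ ^ i ≠ 0) :
    Nat.card (R ⧸ Ideal.span {γ ^ j}) = Nat.card (R ⧸ Ideal.span {γ}) ^ j := by
  induction j with
  | zero =>
    rw [pow_zero, pow_zero, Ideal.span_singleton_one]
    have : Subsingleton (R ⧸ (⊤ : Ideal R)) := Ideal.Quotient.subsingleton_iff.2 rfl
    exact Nat.card_unique
  | succ j ih =>
    let g : R →ₗ[R] R ⧸ Ideal.span {γ ^ (j + 1)} :=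
      (Ideal.span {γ ^ (j + 1)}).mkQ ∘ₗ LinearMap.mulLeft R (γ ^ j)
    have hker : LinearMap.ker g = Ideal.span {γ} := by
      ext r
      rw [Ideal.mem_span_singleton, ← pow_succ_dvd_pow_mul_iff hmax (hj j j.lt_succ_self),
        ← Ideal.mem_span_singleton, LinearMap.mem_ker]
      exact Submodule.Quotient.mk_eq_zero _
    have hrange : LinearMap.range g =
        Submodule.map (Ideal.span {γ ^ (j + 1)}).mkQ (Ideal.span {γ ^ j}) := by
      rw [LinearMap.range_comp]
      congr 1
      ext r
      simp [Ideal.mem_span_singleton, dvd_def, eq_comm]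
    have hle : Ideal.span {γ ^ (j + 1)} ≤ Ideal.span {γ ^ j} :=
      Ideal.span_singleton_le_span_singleton.2 (pow_dvd_pow γ j.le_succ)
    rw [← Submodule.card_quotient_mul_card_quotient _ _ hle, ← hrange,
      ← Nat.card_congr g.quotKerEquivRange.toEquiv, hker,
      ih fun i hi => hj i (hi.trans j.lt_succ_self), pow_succ, mul_comm]

theorem IsLocalRing.natCard_eq_pow {γ : R} {s : ℕ}
    (hmax : IsLocalRing.maximalIdeal R = Ideal.span {γ}) (hnil : γ ^ s = 0)
    (hne : γ ^ (s - 1) ≠ 0) :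
    Nat.card R = Nat.card (R ⧸ Ideal.span {γ}) ^ s := by
  rw [← natCard_quotient_span_pow hmax s fun i hi h =>
    hne (pow_eq_zero_of_le (Nat.le_sub_one_of_lt hi) h), hnil, Ideal.span_singleton_zero]
  exact Nat.card_congr (Submodule.quotEquivOfEqBot ⊥ rfl).toEquiv.symm

/-- A nonzero ideal of a finite local ring has at least as many elements as the residue field. -/
theorem IsLocalRing.natCard_residueField_le [Finite R] {I : Ideal R} (hI : I ≠ ⊥) :
    Nat.card (R ⧸ IsLocalRing.maximalIdeal R) ≤ Nat.card I := by
  obtain ⟨a, ha, ha0⟩ := Submodule.exists_mem_ne_zero_of_ne_bot hI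
  let f := LinearMap.toSpanSingleton R R a
  have hker : LinearMap.ker f ≤ IsLocalRing.maximalIdeal R :=
    IsLocalRing.le_maximalIdeal fun h => ha0 <| by
      have : (1 : R) ∈ LinearMap.ker f := h ▸ Submodule.mem_top
      simpa [f] using this
  have : Finite (R ⧸ LinearMap.ker f) :=
    Finite.of_surjective _ (Submodule.mkQ_surjective (LinearMap.ker f))
  calc Nat.card (R ⧸ IsLocalRing.maximalIdeal R)
      ≤ Nat.card (R ⧸ LinearMap.ker f) :=
        Nat.card_le_card_of_surjective _ (Submodule.factor_surjective hker)
    _ = Nat.card (LinearMap.range f) := Nat.card_congr f.quotKerEquivRange.toEquiv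
    _ ≤ Nat.card I := by
      refine Nat.card_mono (Set.toFinite _) ?_
      rintro _ ⟨r, rfl⟩
      exact I.mul_mem_left r ha

theorem IsLocalRing.natCard_span_singleton_of_maximalIdeal_mul_eq_zero {a : R} (ha : a ≠ 0)
    (hmul : ∀ r ∈ IsLocalRing.maximalIdeal R, r * a = 0) :
    Nat.card (Ideal.span {a}) = Nat.card (R ⧸ IsLocalRing.maximalIdeal R) := by
  have hker : LinearMap.ker (LinearMap.toSpanSingleton R R a) = IsLocalRing.maximalIdeal R := by
    refine le_antisymm (IsLocalRing.le_maximalIdeal fun h => ha ?_) fun r hr => by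
      simpa using hmul r hr
    have : (1 : R) ∈ LinearMap.ker (LinearMap.toSpanSingleton R R a) := h ▸ Submodule.mem_top
    simpa using this
  rw [← hker, Nat.card_congr (LinearMap.quotKerEquivRange _).toEquiv,
    LinearMap.range_toSpanSingleton]

end ChainRing

/-- The linear form `v ↦ ∑ i, x i * v i`. -/
def dotForm {R : Type*} [CommRing R] {k : ℕ} (x : Fin k → R) : (Fin k → R) →ₗ[R] R :=
  ∑ i, x i • LinearMap.proj i

theorem dotForm_apply {R : Type*} [CommRing R] {k : ℕ} (x v : Fin k → R) :
    dotForm x v = ∑ i, x i * v i := by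
  simp [dotForm]

/-- The range of `dotForm x` is the ideal generated by the entries of `x`. -/
theorem range_dotForm {R : Type*} [CommRing R] {k : ℕ} (x : Fin k → R) :
    LinearMap.range (dotForm x) = Ideal.span (Set.range x) := by
  ext r
  simp only [LinearMap.mem_range, dotForm_apply, Ideal.mem_span_range_iff_exists_fun, mul_comm]

theorem natCard_dot_ne_zero_add_natCard_ker {R : Type*} [CommRing R] [Finite R] {k : ℕ}
    (x : Fin k → R) :
    Nat.card {v : Fin k → R // ∑ i, x i * v i ≠ 0} + Nat.card (LinearMap.ker (dotForm x)) =
      Nat.card R ^ k := by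
  classical
  have h : Nat.card (LinearMap.ker (dotForm x)) =
      Nat.card {v : Fin k → R // ∑ i, x i * v i = 0} :=
    Nat.card_congr (Equiv.subtypeEquivRight fun v => by rw [LinearMap.mem_ker, dotForm_apply])
  rw [h, add_comm, ← Nat.card_sum, Nat.card_congr (Equiv.sumCompl _), Nat.card_fun, Nat.card_fin]


/-- The minimum Hamming distance of `S_k^α` equals `(q−1)·q^(sk−1)`: every
nonzero `x ∈ R^k` gives a codeword of Hamming weight at least `(q−1)·q^(sk−1)`, and some
nonzero `x` attains this weight exactly. -/
theorem stmt_3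
    (R : Type) [CommRing R] [IsLocalRing R] [Fintype R]
    (γ : R) (s q : ℕ)
    (hs : 1 ≤ s)
    (hmax : IsLocalRing.maximalIdeal R = Ideal.span {γ})
    (hnil : γ ^ s = 0)
    (hnil' : 2 ≤ s → γ ^ (s - 1) ≠ 0)
    (hq : Nat.card (R ⧸ Ideal.span ({γ} : Set R)) = q)
    (k : ℕ) (hk : 1 ≤ k) :
    (∀ x : Fin k → R, x ≠ 0 →
      (q - 1) * q ^ (s * k - 1) ≤ Nat.card {v : Fin k → R // ∑ i, x i * v i ≠ 0}) ∧
    (∃ x : Fin k → R, x ≠ 0 ∧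
      Nat.card {v : Fin k → R // ∑ i, x i * v i ≠ 0} = (q - 1) * q ^ (s * k - 1)) := by
  have hne : γ ^ (s - 1) ≠ 0 := by
    rcases hs.eq_or_lt with rfl | h
    · simp
    · exact hnil' h
  have hres : Nat.card (R ⧸ IsLocalRing.maximalIdeal R) = q := by rw [hmax, hq]
  have hq0 : 0 < q := hres ▸ Nat.card_pos
  have hcard (x : Fin k → R) : Nat.card {v : Fin k → R // ∑ i, x i * v i ≠ 0} +
      Nat.card (LinearMap.ker (dotForm x)) = q * q ^ (s * k - 1) := by
    rw [natCard_dot_ne_zero_add_natCard_ker, IsLocalRing.natCard_eq_pow hmax hnil hne, hq,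
      ← pow_mul, mul_pow_sub_one (Nat.mul_pos hs hk).ne']
  have hker (x : Fin k → R) : Nat.card (LinearMap.ker (dotForm x)) *
      Nat.card (Ideal.span (Set.range x)) = q * q ^ (s * k - 1) := by
    rw [← range_dotForm, LinearMap.natCard_ker_mul_natCard_range, Nat.card_fun, Nat.card_fin,
      IsLocalRing.natCard_eq_pow hmax hnil hne, hq, ← pow_mul,
      mul_pow_sub_one (Nat.mul_pos hs hk).ne']
  refine ⟨fun x hx => ?_, fun _ => γ ^ (s - 1), fun h => hne (congrFun h ⟨0, hk⟩), ?_⟩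
  · have hI : Ideal.span (Set.range x) ≠ ⊥ := by
      obtain ⟨i, hi⟩ := Function.ne_iff.1 hx
      exact fun h => hi (Ideal.span_eq_bot.1 h _ ⟨i, rfl⟩)
    have hle := hres ▸ IsLocalRing.natCard_residueField_le hI
    have : Nat.card (LinearMap.ker (dotForm x)) ≤ q ^ (s * k - 1) := by
      refine Nat.le_of_mul_le_mul_left ?_ hq0
      rw [← hker x, mul_comm]
      exact Nat.mul_le_mul_left _ hle
    rw [Nat.sub_one_mul, ← hcard x]
    omega
  · have : Nonempty (Fin k) := ⟨⟨0, hk⟩⟩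
    have hrange : Nat.card (Ideal.span (Set.range fun _ : Fin k => γ ^ (s - 1))) = q := by
      rw [Set.range_const, ← hres]
      refine IsLocalRing.natCard_span_singleton_of_maximalIdeal_mul_eq_zero hne fun r hr => ?_
      rw [hmax, Ideal.mem_span_singleton] at hr
      obtain ⟨c, rfl⟩ := hr
      rw [mul_right_comm, mul_pow_sub_one (by omega), hnil, zero_mul]
    have hK := hker fun _ => γ ^ (s - 1)
    rw [hrange, mul_comm] at hK
    rw [Nat.sub_one_mul, ← hcard fun _ => γ ^ (s - 1), ← Nat.eq_of_mul_eq_mul_left hq0 hK,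
      Nat.add_sub_cancel]
end

section
/- Let n, k ≥ 1 and let u_1, …, u_k ∈ R^n be such that the only α ∈ R^k with ∑_{i=1}^k α_i u_i = 0 is α = 0 (i.e. u_1, …, u_k generate a free code of rank k). Then for every nonzero α ∈ R^k, writing j = min_i ν(α_i) (the minimum taken over the nonzero α_i), the codeword c = ∑_{i=1}^k α_i u_i satisfies: every coordinate of c lies in ⟨γ^j⟩, and some coordinate of c lies outside ⟨γ^(j+1)⟩; that is, ν(c) = min_i ν(α_i). -/
/-- If `u_1, …, u_k ∈ R^n` generate a free code of rank `k`, then for every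
nonzero `α ∈ R^k`, writing `j = min_i ν(α_i)` (expressed by: all `α_i ∈ ⟨γ^j⟩` and some
`α_i ∉ ⟨γ^(j+1)⟩`), the codeword `c = ∑ α_i u_i` satisfies: every coordinate of `c` lies in
`⟨γ^j⟩` and some coordinate lies outside `⟨γ^(j+1)⟩`; that is, `ν(c) = min_i ν(α_i)`. -/
theorem stmt_4
    (R : Type) [CommRing R] [IsLocalRing R] [Fintype R]
    (γ : R) (s q : ℕ)
    (hs : 1 ≤ s)
    (hmax : IsLocalRing.maximalIdeal R = Ideal.span {γ})
    (hnil : γ ^ s = 0)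
    (hnil' : 2 ≤ s → γ ^ (s - 1) ≠ 0)
    (hq : Nat.card (R ⧸ Ideal.span ({γ} : Set R)) = q)
    (n k : ℕ) (hn : 1 ≤ n) (hk : 1 ≤ k)
    (u : Fin k → Fin n → R)
    (hfree : ∀ α : Fin k → R, (∑ i, α i • u i) = 0 → α = 0) :
    ∀ α : Fin k → R, α ≠ 0 → ∀ j : ℕ,
      ((∀ i, α i ∈ Ideal.span ({γ ^ j} : Set R)) ∧
        (∃ i, α i ∉ Ideal.span ({γ ^ (j + 1)} : Set R))) →
      ((∀ t, (∑ i, α i • u i) t ∈ Ideal.span ({γ ^ j} : Set R)) ∧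
        (∃ t, (∑ i, α i • u i) t ∉ Ideal.span ({γ ^ (j + 1)} : Set R))) := by
  intro α hα j ⟨hmem, i₀, hi₀⟩
  simp only [Ideal.mem_span_singleton] at hmem hi₀ ⊢
  simp only [Finset.sum_apply, Pi.smul_apply, smul_eq_mul]
  refine ⟨fun t => Finset.dvd_sum fun i _ => (hmem i).mul_right _, ?_⟩
  have hjs : j < s := by
    by_contra! h
    refine hα (funext fun i => ?_)
    have hi := hmem i
    rwa [pow_eq_zero_of_le h hnil, zero_dvd_iff] at hi
  have htop : γ ^ (s - 1) ≠ 0 := by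
    rcases hs.eq_or_lt with rfl | h
    · simp
    · exact hnil' h
  by_contra! hc
  have hzero : (fun i => γ ^ (s - 1 - j) * α i) = 0 := by
    refine hfree _ (funext fun t => ?_)
    obtain ⟨d, hd⟩ := hc t
    simp only [Finset.sum_apply, Pi.smul_apply, smul_eq_mul, mul_assoc, ← Finset.mul_sum, hd,
      Pi.zero_apply]
    rw [← mul_assoc, ← pow_add, show s - 1 - j + (j + 1) = s by omega, hnil, zero_mul]
  obtain ⟨b, hb⟩ := hmem i₀
  have hunit : IsUnit b := by
    by_contra h
    have hbm : b ∈ IsLocalRing.maximalIdeal R := (IsLocalRing.mem_maximalIdeal b).2 h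
    rw [hmax, Ideal.mem_span_singleton] at hbm
    exact hi₀ (by rw [hb, pow_succ]; exact mul_dvd_mul_left _ hbm)
  have hprod : γ ^ (s - 1 - j) * α i₀ = 0 := congrFun hzero i₀
  rw [hb, ← mul_assoc, ← pow_add, show s - 1 - j + j = s - 1 by omega] at hprod
  exact htop (hunit.mul_left_eq_zero.1 hprod)
end

section
/- Let k ≥ 1. For each j ∈ {0,…,s−1}, the number of x ∈ R^k whose codeword (x·v)_{v∈R^k} in S_k^α has Hamming weight exactly q^(sk) − q^(j+s(k−1)) equals q^(k(s−j)) − q^(k(s−j−1)), and the only x giving Hamming weight 0 is x = 0. (The weights q^(sk) − q^(j+s(k−1)) for j = 0, …, s−1 are pairwise distinct, and these counts sum to q^(sk) − 1, accounting for all nonzero codewords.) -/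
/-- First isomorphism theorem, counted. -/
theorem LinearMap.natCard_eq_ker_mul_range {R M N : Type*} [Ring R] [AddCommGroup M] [Module R M]
    [AddCommGroup N] [Module R N] (f : M →ₗ[R] N) :
    Nat.card M = Nat.card (LinearMap.ker f) * Nat.card (LinearMap.range f) := by
  rw [Submodule.card_eq_card_quotient_mul_card (LinearMap.ker f),
    Nat.card_congr f.quotKerEquivRange.toEquiv]

namespace FiniteChainRing

theorem mul_eq_add_mul_sub_one (s : ℕ) {k : ℕ} (hk : 1 ≤ k) : s * k = s + s * (k - 1) := by
  rw [Nat.mul_sub_one, Nat.add_sub_cancel' (Nat.le_mul_of_pos_right s hk)]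

theorem exists_level {R : Type*} [CommRing R] {γ : R} {s : ℕ}
    (hpow : ∀ m, γ ^ m = 0 ↔ s ≤ m) {k : ℕ} {x : Fin k → R} (hx : x ≠ 0) :
    ∃ j < s, (∀ i, x i ∈ Ideal.span {γ ^ j}) ∧ ¬ ∀ i, x i ∈ Ideal.span {γ ^ (j + 1)} := by
  by_contra! h
  have hall : ∀ j ≤ s, ∀ i, x i ∈ Ideal.span {γ ^ j} := by
    intro j
    induction j with
    | zero => simp
    | succ j ih => exact fun hj => h j hj (ih (by omega))
  refine hx (funext fun i => ?_)
  simpa [(hpow s).2 le_rfl] using hall s le_rfl i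

variable {R : Type*} [CommRing R] [IsLocalRing R] {γ : R} {s : ℕ}

theorem isUnit_of_notMem_span_pow_succ (hmax : IsLocalRing.maximalIdeal R = Ideal.span {γ})
    {j : ℕ} {t : R} (h : γ ^ j * t ∉ Ideal.span {γ ^ (j + 1)}) : IsUnit t := by
  by_contra ht
  have hmem : t ∈ IsLocalRing.maximalIdeal R := ht
  rw [hmax, Ideal.mem_span_singleton] at hmem
  obtain ⟨c, rfl⟩ := hmem
  exact h (Ideal.mem_span_singleton.2 ⟨c, by ring⟩)

theorem mem_span_pow_of_mul_eq_zero (hmax : IsLocalRing.maximalIdeal R = Ideal.span {γ})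
    (hpow : ∀ m, γ ^ m = 0 ↔ s ≤ m) {m : ℕ} {r : R} (h : γ ^ m * r = 0) :
    ∀ n, m + n ≤ s → r ∈ Ideal.span {γ ^ n}
  | 0, _ => by simp
  | n + 1, hn => by
    obtain ⟨t, rfl⟩ := Ideal.mem_span_singleton.1
      (mem_span_pow_of_mul_eq_zero hmax hpow h n (by omega))
    by_contra hr
    have ht := isUnit_of_notMem_span_pow_succ hmax hr
    rw [← mul_assoc, ← pow_add, ht.mul_left_eq_zero, hpow] at h
    omega

theorem mul_pow_eq_zero_iff (hmax : IsLocalRing.maximalIdeal R = Ideal.span {γ})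
    (hpow : ∀ m, γ ^ m = 0 ↔ s ≤ m) {m n : ℕ} (hmn : m + n = s) {r : R} :
    γ ^ m * r = 0 ↔ r ∈ Ideal.span {γ ^ n} := by
  refine ⟨fun h => mem_span_pow_of_mul_eq_zero hmax hpow h n hmn.le, fun h => ?_⟩
  obtain ⟨t, rfl⟩ := Ideal.mem_span_singleton.1 h
  rw [← mul_assoc, ← pow_add, (hpow _).2 hmn.ge, zero_mul]

theorem natCard_span_pow_eq_mul (hmax : IsLocalRing.maximalIdeal R = Ideal.span {γ})
    (hpow : ∀ m, γ ^ m = 0 ↔ s ≤ m) {m j : ℕ} (hj : m + (j + 1) = s) :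
    Nat.card (Ideal.span {γ ^ j}) =
      Nat.card (Ideal.span {γ ^ (j + 1)}) * Nat.card (Ideal.span {γ ^ (s - 1)}) := by
  let f : Ideal.span {γ ^ j} →ₗ[R] R :=
    (LinearMap.mulLeft R (γ ^ m)).comp (Submodule.subtype (Ideal.span {γ ^ j}))
  have hle : Ideal.span {γ ^ (j + 1)} ≤ Ideal.span {γ ^ j} :=
    Ideal.span_singleton_le_span_singleton.2 (pow_dvd_pow γ j.le_succ)
  have hker : LinearMap.ker f =
      Submodule.comap (Submodule.subtype (Ideal.span {γ ^ j})) (Ideal.span {γ ^ (j + 1)}) := by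
    ext r
    exact mul_pow_eq_zero_iff hmax hpow hj
  have hrange : LinearMap.range f = Ideal.span {γ ^ (s - 1)} := by
    have hs : s - 1 = m + j := by omega
    ext r
    rw [LinearMap.mem_range, Ideal.mem_span_singleton, hs]
    constructor
    · rintro ⟨⟨y, hy⟩, rfl⟩
      obtain ⟨t, rfl⟩ := Ideal.mem_span_singleton.1 hy
      exact ⟨t, show γ ^ m * (γ ^ j * t) = _ by ring⟩
    · rintro ⟨t, rfl⟩
      exact ⟨⟨γ ^ j * t, Ideal.mem_span_singleton.2 ⟨t, rfl⟩⟩,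
        show γ ^ m * (γ ^ j * t) = _ by ring⟩
  rw [f.natCard_eq_ker_mul_range, hrange, hker,
    Nat.card_congr (Submodule.comapSubtypeEquivOfLe hle).toEquiv]

theorem natCard_span_pow_sub_one (hmax : IsLocalRing.maximalIdeal R = Ideal.span {γ})
    (hpow : ∀ m, γ ^ m = 0 ↔ s ≤ m) (hs : 1 ≤ s) :
    Nat.card (Ideal.span {γ ^ (s - 1)}) = Nat.card (R ⧸ Ideal.span ({γ} : Set R)) := by
  have hker : LinearMap.ker (LinearMap.mulLeft R (γ ^ (s - 1))) = Ideal.span {γ} := by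
    ext r
    simpa using mul_pow_eq_zero_iff hmax hpow (m := s - 1) (n := 1) (by omega) (r := r)
  have hrange : LinearMap.range (LinearMap.mulLeft R (γ ^ (s - 1))) =
      Ideal.span {γ ^ (s - 1)} := by
    ext r
    simp [Ideal.mem_span_singleton, dvd_def, eq_comm]
  rw [← hrange, ← hker]
  exact (Nat.card_congr (LinearMap.mulLeft R (γ ^ (s - 1))).quotKerEquivRange.toEquiv).symm

theorem natCard_span_pow (hmax : IsLocalRing.maximalIdeal R = Ideal.span {γ})
    (hpow : ∀ m, γ ^ m = 0 ↔ s ≤ m) :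
    ∀ n j, j + n = s →
      Nat.card (Ideal.span {γ ^ j}) = Nat.card (R ⧸ Ideal.span ({γ} : Set R)) ^ n
  | 0, j, h => by
    rw [(hpow j).2 (by omega), Ideal.span_singleton_eq_bot.2 rfl]
    simp
  | n + 1, j, h => by
    rw [natCard_span_pow_eq_mul hmax hpow (m := n) (by omega),
      natCard_span_pow hmax hpow n (j + 1) (by omega),
      natCard_span_pow_sub_one hmax hpow (by omega), pow_succ]

theorem natCard_eq_pow (hmax : IsLocalRing.maximalIdeal R = Ideal.span {γ})
    (hpow : ∀ m, γ ^ m = 0 ↔ s ≤ m) :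
    Nat.card R = Nat.card (R ⧸ Ideal.span ({γ} : Set R)) ^ s := by
  rw [← natCard_span_pow hmax hpow s 0 (by omega), pow_zero, Ideal.span_singleton_one]
  exact (Nat.card_congr Submodule.topEquiv.toEquiv).symm

theorem natCard_forall_mem_span_pow (hmax : IsLocalRing.maximalIdeal R = Ideal.span {γ})
    (hpow : ∀ m, γ ^ m = 0 ↔ s ≤ m) (k : ℕ) {j : ℕ} (hj : j ≤ s) :
    Nat.card {x : Fin k → R // ∀ i, x i ∈ Ideal.span {γ ^ j}} =
      Nat.card (R ⧸ Ideal.span ({γ} : Set R)) ^ (k * (s - j)) := by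
  rw [Nat.card_congr (Equiv.subtypePiEquivPi (p := fun _ r => r ∈ Ideal.span {γ ^ j})),
    Nat.card_fun, Nat.card_fin]
  change Nat.card (Ideal.span {γ ^ j}) ^ k = _
  rw [natCard_span_pow hmax hpow (s - j) j (by omega), ← pow_mul, mul_comm]

/-- A vector with entries in `⟨γ ^ j⟩`, not all in `⟨γ ^ (j + 1)⟩`, has orthogonal complement of
size `q ^ (j + s * (k - 1))`. -/
theorem natCard_dotProduct_eq_zero [Finite R]
    (hmax : IsLocalRing.maximalIdeal R = Ideal.span {γ})
    (hpow : ∀ m, γ ^ m = 0 ↔ s ≤ m) {k : ℕ} (hk : 1 ≤ k) {j : ℕ} (hj : j ≤ s) {x : Fin k → R}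
    (hx : ∀ i, x i ∈ Ideal.span {γ ^ j}) (hx' : ¬ ∀ i, x i ∈ Ideal.span {γ ^ (j + 1)}) :
    Nat.card {v : Fin k → R // ∑ i, x i * v i = 0} =
      Nat.card (R ⧸ Ideal.span ({γ} : Set R)) ^ (j + s * (k - 1)) := by
  have : Finite (R ⧸ Ideal.span ({γ} : Set R)) := Quotient.finite _
  let f : (Fin k → R) →ₗ[R] R := dotProductBilin R R x
  have hf (v) : f v = ∑ i, x i * v i := rfl
  have hrange : LinearMap.range f = Ideal.span {γ ^ j} := by
    apply le_antisymm
    · rintro _ ⟨v, rfl⟩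
      rw [hf]
      exact Ideal.sum_mem _ fun i _ => Ideal.mul_mem_right _ _ (hx i)
    · push Not at hx'
      obtain ⟨i, hi⟩ := hx'
      obtain ⟨t, ht⟩ := Ideal.mem_span_singleton.1 (hx i)
      rw [ht] at hi
      obtain ⟨u, rfl⟩ := isUnit_of_notMem_span_pow_succ hmax hi
      refine (Ideal.span_singleton_le_iff_mem _).2 ⟨Pi.single i (↑u⁻¹ : R), ?_⟩
      rw [hf, Finset.sum_eq_single i (fun b _ hb => by simp [hb]) (by simp)]
      simp [ht, mul_assoc]
  have hcard := f.natCard_eq_ker_mul_range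
  rw [hrange, natCard_span_pow hmax hpow (s - j) j (by omega), Nat.card_fun, Nat.card_fin,
    natCard_eq_pow hmax hpow, ← pow_mul] at hcard
  have hexp : s * k = j + s * (k - 1) + (s - j) := by
    rw [mul_eq_add_mul_sub_one s hk]
    omega
  rw [hexp, pow_add _ _ (s - j)] at hcard
  exact (Nat.eq_of_mul_eq_mul_right (pow_pos Nat.card_pos _) hcard).symm

theorem natCard_dotProduct_ne_zero [Finite R]
    (hmax : IsLocalRing.maximalIdeal R = Ideal.span {γ})
    (hpow : ∀ m, γ ^ m = 0 ↔ s ≤ m) {k : ℕ} (hk : 1 ≤ k) {j : ℕ} (hj : j ≤ s) {x : Fin k → R}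
    (hx : ∀ i, x i ∈ Ideal.span {γ ^ j}) (hx' : ¬ ∀ i, x i ∈ Ideal.span {γ ^ (j + 1)}) :
    Nat.card {v : Fin k → R // ∑ i, x i * v i ≠ 0} =
      Nat.card (R ⧸ Ideal.span ({γ} : Set R)) ^ (s * k) -
        Nat.card (R ⧸ Ideal.span ({γ} : Set R)) ^ (j + s * (k - 1)) := by
  classical
  have := Fintype.ofFinite R
  rw [← natCard_dotProduct_eq_zero hmax hpow hk hj hx hx', pow_mul, ← natCard_eq_pow hmax hpow]
  simp only [Nat.card_eq_fintype_card, ne_eq]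
  rw [Fintype.card_subtype_compl, Fintype.card_fun, Fintype.card_fin]

theorem weight_injOn {q : ℕ} (hq : 2 ≤ q) {k : ℕ} (hk : 1 ≤ k) {j₁ j₂ : ℕ} (h₁ : j₁ ≤ s)
    (h₂ : j₂ ≤ s)
    (h : q ^ (s * k) - q ^ (j₁ + s * (k - 1)) = q ^ (s * k) - q ^ (j₂ + s * (k - 1))) :
    j₁ = j₂ := by
  have hexp := mul_eq_add_mul_sub_one s hk
  have hle {j : ℕ} (hj : j ≤ s) : q ^ (j + s * (k - 1)) ≤ q ^ (s * k) :=
    Nat.pow_le_pow_right (by omega) (by omega)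
  have h' : q ^ (j₁ + s * (k - 1)) = q ^ (j₂ + s * (k - 1)) := by
    have := hle h₁
    have := hle h₂
    omega
  have := Nat.pow_right_injective hq h'
  omega

theorem natCard_dotProduct_ne_zero_eq_iff [Finite R]
    (hmax : IsLocalRing.maximalIdeal R = Ideal.span {γ})
    (hpow : ∀ m, γ ^ m = 0 ↔ s ≤ m) (hq : 2 ≤ Nat.card (R ⧸ Ideal.span ({γ} : Set R)))
    {k : ℕ} (hk : 1 ≤ k) {j : ℕ} (hj : j < s) (x : Fin k → R) :
    Nat.card {v : Fin k → R // ∑ i, x i * v i ≠ 0} =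
        Nat.card (R ⧸ Ideal.span ({γ} : Set R)) ^ (s * k) -
          Nat.card (R ⧸ Ideal.span ({γ} : Set R)) ^ (j + s * (k - 1)) ↔
      (∀ i, x i ∈ Ideal.span {γ ^ j}) ∧ ¬ ∀ i, x i ∈ Ideal.span {γ ^ (j + 1)} := by
  refine ⟨fun h => ?_, fun h => natCard_dotProduct_ne_zero hmax hpow hk hj.le h.1 h.2⟩
  rcases eq_or_ne x 0 with rfl | hx
  · refine absurd (weight_injOn hq hk hj.le le_rfl (h.symm.trans ?_)) hj.ne
    simp [mul_eq_add_mul_sub_one s hk]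
  · obtain ⟨j', hj', hx₁, hx₂⟩ := exists_level hpow hx
    rw [natCard_dotProduct_ne_zero hmax hpow hk hj'.le hx₁ hx₂] at h
    obtain rfl := weight_injOn hq hk hj'.le hj.le h
    exact ⟨hx₁, hx₂⟩

theorem natCard_level [Finite R] (hmax : IsLocalRing.maximalIdeal R = Ideal.span {γ})
    (hpow : ∀ m, γ ^ m = 0 ↔ s ≤ m) (k : ℕ) {j : ℕ} (hj : j < s) :
    Nat.card {x : Fin k → R // (∀ i, x i ∈ Ideal.span {γ ^ j}) ∧
        ¬ ∀ i, x i ∈ Ideal.span {γ ^ (j + 1)}} =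
      Nat.card (R ⧸ Ideal.span ({γ} : Set R)) ^ (k * (s - j)) -
        Nat.card (R ⧸ Ideal.span ({γ} : Set R)) ^ (k * (s - j - 1)) := by
  rw [← natCard_forall_mem_span_pow hmax hpow k hj.le, Nat.sub_sub,
    ← natCard_forall_mem_span_pow hmax hpow k hj]
  refine Set.ncard_sdiff (s := {x : Fin k → R | ∀ i, x i ∈ Ideal.span {γ ^ (j + 1)}})
    (t := {x | ∀ i, x i ∈ Ideal.span {γ ^ j}}) fun x hx i => ?_
  exact Ideal.span_singleton_le_span_singleton.2 (pow_dvd_pow γ j.le_succ) (hx i)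

theorem sum_level_card {q : ℕ} (hq : 1 ≤ q) (s k : ℕ) :
    ∑ j ∈ Finset.range s, (q ^ (k * (s - j)) - q ^ (k * (s - j - 1))) = q ^ (s * k) - 1 := by
  rw [← Finset.sum_range_reflect]
  have hmono : Monotone fun n => q ^ (k * n) := fun a b h =>
    Nat.pow_le_pow_right hq (Nat.mul_le_mul_left k h)
  have := Finset.sum_range_tsub hmono s
  simp only [mul_zero, pow_zero] at this
  rw [mul_comm s k, ← this]
  refine Finset.sum_congr rfl fun j hj => ?_
  have hj := Finset.mem_range.1 hj
  rw [show s - (s - 1 - j) = j + 1 by omega, Nat.add_sub_cancel]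

end FiniteChainRing

/-- Hamming weight distribution of `S_k^α`: for each `j ∈ {0,…,s−1}` exactly
`q^(k(s−j)) − q^(k(s−j−1))` elements `x ∈ R^k` give codewords of Hamming weight
`q^(sk) − q^(j+s(k−1))`; only `x = 0` gives weight `0`; these weights are pairwise distinct
and the counts sum to `q^(sk) − 1`. -/
theorem stmt_6
    (R : Type) [CommRing R] [IsLocalRing R] [Fintype R]
    (γ : R) (s q : ℕ)
    (hs : 1 ≤ s)
    (hmax : IsLocalRing.maximalIdeal R = Ideal.span {γ})
    (hnil : γ ^ s = 0)
    (hnil' : 2 ≤ s → γ ^ (s - 1) ≠ 0)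
    (hq : Nat.card (R ⧸ Ideal.span ({γ} : Set R)) = q)
    (k : ℕ) (hk : 1 ≤ k) :
    (∀ j : ℕ, j < s →
      Nat.card {x : Fin k → R //
          Nat.card {v : Fin k → R // ∑ i, x i * v i ≠ 0}
            = q ^ (s * k) - q ^ (j + s * (k - 1))}
        = q ^ (k * (s - j)) - q ^ (k * (s - j - 1))) ∧
    (∀ x : Fin k → R,
      Nat.card {v : Fin k → R // ∑ i, x i * v i ≠ 0} = 0 → x = 0) ∧
    (∀ j₁ : ℕ, j₁ < s → ∀ j₂ : ℕ, j₂ < s →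
      q ^ (s * k) - q ^ (j₁ + s * (k - 1)) = q ^ (s * k) - q ^ (j₂ + s * (k - 1)) →
      j₁ = j₂) ∧
    (∑ j ∈ Finset.range s, (q ^ (k * (s - j)) - q ^ (k * (s - j - 1)))
      = q ^ (s * k) - 1) := by
  have hpow : ∀ m, γ ^ m = 0 ↔ s ≤ m := by
    refine fun m => ⟨fun h => ?_, fun h => pow_eq_zero_of_le h hnil⟩
    by_contra! hm
    have hzero : γ ^ (s - 1) = 0 := pow_eq_zero_of_le (by omega) h
    obtain rfl | hs := hs.eq_or_lt
    · simp at hzero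
    · exact hnil' hs hzero
  have hq2 : 2 ≤ q := by
    have : Nontrivial (R ⧸ Ideal.span ({γ} : Set R)) :=
      Ideal.Quotient.nontrivial_iff.2 (hmax ▸ Ideal.IsPrime.ne_top')
    have : Finite (R ⧸ Ideal.span ({γ} : Set R)) := Quotient.finite _
    exact hq ▸ Finite.one_lt_card
  subst hq
  refine ⟨fun j hj => ?_, fun x hx => ?_, fun j₁ h₁ j₂ h₂ h =>
    FiniteChainRing.weight_injOn hq2 hk h₁.le h₂.le h,
    FiniteChainRing.sum_level_card (by omega) s k⟩
  · simp only [FiniteChainRing.natCard_dotProduct_ne_zero_eq_iff hmax hpow hq2 hk hj]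
    exact FiniteChainRing.natCard_level hmax hpow k hj
  · have hempty := (Finite.card_eq_zero_iff.1 hx)
    funext i
    by_contra hi
    exact hempty.false ⟨Pi.single i 1, by simpa [Pi.single_apply] using hi⟩
end

section
/- Let k ≥ 1 and let x ∈ R^k be nonzero. Then ∑_{v ∈ R^k} w_Hom(x·v) = (q−1)·q^(s(k+1)−2). In particular, all nonzero codewords of the linear simplex α code S_k^α have the same homogeneous weight, and the minimum homogeneous weight of S_k^α equals (q−1)·q^(s(k+1)−2). -/
-- The homogeneous weight on a finite chain ring `R` with maximal ideal `⟨γ⟩`, nilpotency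
-- index `s` and residue field of cardinality `q`.
open Classical in
noncomputable def wHom {R : Type} [CommRing R] (γ : R) (s q : ℕ) (y : R) : ℕ :=
  if y = 0 then 0
  else if y ∈ Ideal.span ({γ ^ (s - 1)} : Set R) then q ^ (s - 1)
  else (q - 1) * q ^ (s - 2)

open IsLocalRing

theorem AddMonoidHom.card_comap_of_le_range {A B : Type*} [AddCommGroup A] [AddCommGroup B]
    (f : A →+ B) {N : AddSubgroup B} (hN : N ≤ f.range) :
    Nat.card (N.comap f) = Nat.card f.ker * Nat.card N := by
  have hle : f.ker ≤ N.comap f := fun a ha => by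
    simp [AddMonoidHom.mem_ker.mp ha, N.zero_mem]
  have h : f.ker.relIndex (N.comap f) = Nat.card N := by
    rw [← AddMonoidHom.comap_bot, AddSubgroup.relIndex_comap, AddSubgroup.map_comap_eq_self hN,
      AddSubgroup.relIndex_bot_left]
  rw [← h, ← AddSubgroup.relIndex_bot_left, ← AddSubgroup.relIndex_bot_left,
    AddSubgroup.relIndex_mul_relIndex _ _ _ bot_le hle]

section ChainRing

variable {R : Type*} [CommRing R] [IsLocalRing R] {γ : R} {s : ℕ}

theorem IsLocalRing.exists_eq_pow_mul_isUnit (hmax : maximalIdeal R = Ideal.span {γ})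
    (hnil : γ ^ s = 0) {y : R} (hy : y ≠ 0) :
    ∃ j < s, ∃ u : R, IsUnit u ∧ y = γ ^ j * u := by
  classical
  have hex : ∃ n, ¬ γ ^ n ∣ y := ⟨s, by rwa [hnil, zero_dvd_iff]⟩
  obtain ⟨j, hj⟩ : ∃ j, Nat.find hex = j + 1 := by
    refine Nat.exists_eq_succ_of_ne_zero fun h0 => Nat.find_spec hex ?_
    simp [h0]
  have hspec : ¬ γ ^ (j + 1) ∣ y := hj ▸ Nat.find_spec hex
  obtain ⟨u, rfl⟩ : γ ^ j ∣ y := not_not.mp (Nat.find_min hex (by omega))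
  refine ⟨j, ?_, u, ?_, rfl⟩
  · by_contra hsj
    exact hy (by rw [pow_eq_zero_of_le (not_lt.mp hsj) hnil, zero_mul])
  · by_contra hu
    have hmem : u ∈ Ideal.span {γ} := hmax ▸ (mem_maximalIdeal u).mpr hu
    rw [pow_succ] at hspec
    exact hspec (mul_dvd_mul_left _ (Ideal.mem_span_singleton.mp hmem))

theorem IsLocalRing.pow_pred_mem_of_ne_zero_mem (hmax : maximalIdeal R = Ideal.span {γ})
    (hnil : γ ^ s = 0) {I : Ideal R} {y : R} (hy : y ≠ 0) (hyI : y ∈ I) :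
    γ ^ (s - 1) ∈ I := by
  obtain ⟨j, hj, u, hu, rfl⟩ := exists_eq_pow_mul_isUnit hmax hnil hy
  exact I.mem_of_dvd (pow_dvd_pow γ (by omega)) ((I.mul_unit_mem_iff_mem hu).mp hyI)

theorem IsLocalRing.dvd_of_mul_eq_zero (hmax : maximalIdeal R = Ideal.span {γ})
    (hnil : γ ^ s = 0) (hnil' : γ ^ (s - 1) ≠ 0) {y : R} (hy : γ * y = 0) :
    γ ^ (s - 1) ∣ y := by
  rcases eq_or_ne y 0 with rfl | hy0
  · exact dvd_zero _
  obtain ⟨j, hj, u, hu, rfl⟩ := exists_eq_pow_mul_isUnit hmax hnil hy0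
  rw [← mul_assoc, ← pow_succ', hu.mul_left_eq_zero] at hy
  have : s - 1 < j + 1 := by
    by_contra h
    exact hnil' (pow_eq_zero_of_le (not_lt.mp h) hy)
  exact (pow_dvd_pow γ (by omega)).mul_right u

theorem IsLocalRing.card_span_pow_pred (hs : 1 ≤ s) (hmax : maximalIdeal R = Ideal.span {γ})
    (hnil : γ ^ s = 0) (hnil' : γ ^ (s - 1) ≠ 0) :
    Nat.card (Ideal.span {γ ^ (s - 1)}) = Nat.card (R ⧸ Ideal.span {γ}) := by
  have hrange : (AddMonoidHom.mulLeft (γ ^ (s - 1))).range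
      = (Ideal.span {γ ^ (s - 1)}).toAddSubgroup := by
    ext y
    simp [Ideal.mem_span_singleton, dvd_iff_exists_eq_mul_right, eq_comm]
  have hker : (AddMonoidHom.mulLeft (γ ^ (s - 1))).ker = (Ideal.span {γ}).toAddSubgroup := by
    ext y
    simp only [AddMonoidHom.mem_ker, AddMonoidHom.coe_mulLeft, Submodule.mem_toAddSubgroup]
    constructor
    · intro hy
      rw [← hmax, mem_maximalIdeal]
      intro hu
      exact hnil' (hu.mul_left_eq_zero.mp hy)
    · intro hy
      obtain ⟨z, rfl⟩ := Ideal.mem_span_singleton.mp hy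
      rw [← mul_assoc, ← pow_succ, Nat.sub_add_cancel hs, hnil, zero_mul]
  have h := AddSubgroup.index_ker (AddMonoidHom.mulLeft (γ ^ (s - 1)))
  rw [hrange, hker] at h
  exact h.symm

theorem IsLocalRing.card_span_pow_eq_mul_succ (hs : 1 ≤ s) (hmax : maximalIdeal R = Ideal.span {γ})
    (hnil : γ ^ s = 0) (hnil' : γ ^ (s - 1) ≠ 0) {j : ℕ} (hj : j < s) :
    Nat.card (Ideal.span {γ ^ j})
      = Nat.card (R ⧸ Ideal.span {γ}) * Nat.card (Ideal.span {γ ^ (j + 1)}) := by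
  have hker : (AddMonoidHom.mulLeft γ).ker = (Ideal.span {γ ^ (s - 1)}).toAddSubgroup := by
    ext y
    simp only [AddMonoidHom.mem_ker, AddMonoidHom.coe_mulLeft, Submodule.mem_toAddSubgroup,
      Ideal.mem_span_singleton]
    refine ⟨dvd_of_mul_eq_zero hmax hnil hnil', ?_⟩
    rintro ⟨z, rfl⟩
    rw [← mul_assoc, ← pow_succ', Nat.sub_add_cancel hs, hnil, zero_mul]
  have hle : (Ideal.span {γ ^ (j + 1)}).toAddSubgroup ≤ (AddMonoidHom.mulLeft γ).range := by
    intro y hy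
    obtain ⟨z, rfl⟩ := Ideal.mem_span_singleton.mp hy
    exact ⟨γ ^ j * z, by simp [pow_succ', mul_assoc]⟩
  have hcomap : (Ideal.span {γ ^ (j + 1)}).toAddSubgroup.comap (AddMonoidHom.mulLeft γ)
      = (Ideal.span {γ ^ j}).toAddSubgroup := by
    ext y
    simp only [AddSubgroup.mem_comap, AddMonoidHom.coe_mulLeft, Submodule.mem_toAddSubgroup,
      Ideal.mem_span_singleton]
    constructor
    · rintro ⟨z, hz⟩
      have h : γ ^ (s - 1) ∣ y - γ ^ j * z :=
        dvd_of_mul_eq_zero hmax hnil hnil' (by rw [mul_sub, hz]; ring)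
      exact (dvd_sub_left (dvd_mul_right _ _)).mp ((pow_dvd_pow γ (by omega)).trans h)
    · intro h
      rw [pow_succ']
      exact mul_dvd_mul_left γ h
  have h := AddMonoidHom.card_comap_of_le_range (AddMonoidHom.mulLeft γ) hle
  rw [hcomap, hker] at h
  rw [← card_span_pow_pred hs hmax hnil hnil']
  exact h

theorem IsLocalRing.card_eq_card_quotient_pow (hs : 1 ≤ s)
    (hmax : maximalIdeal R = Ideal.span {γ}) (hnil : γ ^ s = 0) (hnil' : γ ^ (s - 1) ≠ 0) :
    Nat.card R = Nat.card (R ⧸ Ideal.span {γ}) ^ s := by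
  have h : ∀ j ≤ s, Nat.card R
      = Nat.card (R ⧸ Ideal.span {γ}) ^ j * Nat.card (Ideal.span {γ ^ j}) := by
    intro j
    induction j with
    | zero =>
      intro _
      simp [Ideal.span_singleton_one]
    | succ j ih =>
      intro hj
      rw [ih (by omega), card_span_pow_eq_mul_succ hs hmax hnil hnil' hj,
        pow_succ (Nat.card _), mul_assoc]
  simpa [hnil] using h s le_rfl

end ChainRing

open Classical in
theorem card_mul_wHom_add {R : Type} [CommRing R] {γ : R} {s q : ℕ} (hs : 1 ≤ s) (hq : 1 ≤ q)
    (y : R) :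
    q * wHom γ s q y + (if y = 0 then q ^ s else 0)
      = (q - 1) * q ^ (s - 1)
        + (if y ∈ Ideal.span ({γ ^ (s - 1)} : Set R) then q ^ (s - 1) else 0) := by
  obtain ⟨t, rfl⟩ := Nat.exists_eq_add_of_le' hs
  obtain ⟨p, rfl⟩ := Nat.exists_eq_add_of_le' hq
  unfold wHom
  split_ifs with h0 hm hm
  · simp; ring
  · exact absurd (h0 ▸ Ideal.zero_mem _) hm
  · simp; ring
  · rcases t with _ | t
    · simp at hm
    · simp [pow_succ]; ring

open Classical in
theorem sum_wHom {R : Type} [CommRing R] [IsLocalRing R] [Fintype R] {γ : R} {s q : ℕ}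
    (hs : 1 ≤ s) (hmax : IsLocalRing.maximalIdeal R = Ideal.span {γ})
    (hnil : γ ^ s = 0) (hnil' : γ ^ (s - 1) ≠ 0)
    (hq : Nat.card (R ⧸ Ideal.span ({γ} : Set R)) = q)
    {k : ℕ} (hk : 1 ≤ k) {x : Fin k → R} (hx : x ≠ 0) :
    ∑ v : Fin k → R, wHom γ s q (∑ i, x i * v i) = (q - 1) * q ^ (s * (k + 1) - 2) := by
  have hq1 : 1 ≤ q := hq ▸ Nat.card_pos
  have hR : Nat.card R = q ^ s := hq ▸ card_eq_card_quotient_pow hs hmax hnil hnil'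
  have hM : Nat.card (Ideal.span {γ ^ (s - 1)}) = q :=
    hq ▸ card_span_pow_pred hs hmax hnil hnil'
  let f : (Fin k → R) →ₗ[R] R := Fintype.linearCombination R x
  have hf : ∀ v, f v = ∑ i, x i * v i := fun v => by
    simp [f, Fintype.linearCombination_apply, mul_comm]
  obtain ⟨i, hi⟩ := Function.ne_iff.mp hx
  have hle : Ideal.span {γ ^ (s - 1)} ≤ LinearMap.range f := by
    rw [Ideal.span_singleton_le_iff_mem]
    exact pow_pred_mem_of_ne_zero_mem hmax hnil hi ⟨Pi.single i 1, by simp [f]⟩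
  have hcard : Nat.card {v // f v ∈ Ideal.span {γ ^ (s - 1)}} = Nat.card {v // f v = 0} * q :=
    hM ▸ AddMonoidHom.card_comap_of_le_range f.toAddMonoidHom
      (N := (Ideal.span {γ ^ (s - 1)}).toAddSubgroup) hle
  have hsum := Finset.sum_congr rfl fun v (_ : v ∈ Finset.univ) =>
    card_mul_wHom_add (γ := γ) hs hq1 (f v)
  simp only [Finset.sum_add_distrib, ← Finset.mul_sum, ← Finset.sum_filter, Finset.sum_const,
    ← Fintype.card_subtype, ← Nat.card_eq_fintype_card, Finset.card_univ, smul_eq_mul,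
    hcard, Nat.card_fun, hR, Nat.card_fin, mul_assoc, mul_pow_sub_one (by omega : s ≠ 0) q,
    Nat.add_right_cancel_iff] at hsum
  simp only [← hf]
  apply Nat.eq_of_mul_eq_mul_left hq1
  rw [hsum]
  have hexp : s * k + (s - 1) = s * (k + 1) - 2 + 1 := by
    have : 1 ≤ s * k := Nat.mul_pos hs hk
    rw [Nat.mul_succ]
    omega
  calc (q - 1) * ((q ^ s) ^ k * q ^ (s - 1)) = (q - 1) * q ^ (s * k + (s - 1)) := by
        rw [pow_add, pow_mul]
    _ = q * ((q - 1) * q ^ (s * (k + 1) - 2)) := by rw [hexp]; ring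

/-- For nonzero `x ∈ R^k`, the homogeneous weight of the corresponding codeword
of `S_k^α` is `(q−1)·q^(s(k+1)−2)`; in particular all nonzero codewords of `S_k^α` have the
same homogeneous weight and the minimum homogeneous weight of `S_k^α` is
`(q−1)·q^(s(k+1)−2)`. -/
theorem stmt_7
    (R : Type) [CommRing R] [IsLocalRing R] [Fintype R]
    (γ : R) (s q : ℕ)
    (hs : 1 ≤ s)
    (hmax : IsLocalRing.maximalIdeal R = Ideal.span {γ})
    (hnil : γ ^ s = 0)
    (hnil' : 2 ≤ s → γ ^ (s - 1) ≠ 0)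
    (hq : Nat.card (R ⧸ Ideal.span ({γ} : Set R)) = q)
    (k : ℕ) (hk : 1 ≤ k)
    (x : Fin k → R) (hx : x ≠ 0) :
    (∑ v : Fin k → R, wHom γ s q (∑ i, x i * v i) = (q - 1) * q ^ (s * (k + 1) - 2)) ∧
    (∀ y : Fin k → R, y ≠ 0 →
      (q - 1) * q ^ (s * (k + 1) - 2) ≤ ∑ v : Fin k → R, wHom γ s q (∑ i, y i * v i)) ∧
    (∃ y : Fin k → R, y ≠ 0 ∧
      ∑ v : Fin k → R, wHom γ s q (∑ i, y i * v i) = (q - 1) * q ^ (s * (k + 1) - 2)) := by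
  have hpow : γ ^ (s - 1) ≠ 0 := by
    rcases hs.eq_or_lt with rfl | h
    · simp
    · exact hnil' h
  have hsum (y : Fin k → R) (hy : y ≠ 0) := sum_wHom hs hmax hnil hpow hq hk hy
  exact ⟨hsum x hx, fun y hy => (hsum y hy).ge, x, hx, hsum x hx⟩
end

section
/- Let n ≥ 1, let c ∈ R^n, let m ≥ 1, and let λ ∈ R be nonzero with valuation ν(λ) = t. Assume that every element of ⟨γ⟩ occurs exactly m times among the coordinates of c (so the remaining n − q^(s−1)·m coordinates of c are units of R). Then every element of ⟨γ^(t+1)⟩ occurs exactly q^t·m times among the coordinates of λ·c, and each of the remaining coordinates of λ·c lies in ⟨γ^t⟩ \ ⟨γ^(t+1)⟩. -/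
/-- A map between finite types all of whose fibres have `k` elements multiplies cardinality
by `k`. -/
theorem card_eq_card_mul_of_card_fiber {α β : Type} [Finite α] [Finite β] (f : α → β) (k : ℕ)
    (h : ∀ b, Nat.card {a // f a = b} = k) : Nat.card α = Nat.card β * k := by
  have := Fintype.ofFinite β
  rw [← Nat.card_congr (Equiv.sigmaFiberEquiv f), Nat.card_sigma]
  simp [h]

/-- The nonempty fibres of multiplication by `r` have the cardinality of the annihilator. -/
theorem card_mul_eq_mul {R : Type} [CommRing R] (r x₀ : R) :
    Nat.card {x : R // r * x = r * x₀} = Nat.card {x : R // r * x = 0} :=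
  Nat.card_congr ((Equiv.subRight x₀).subtypeEquiv fun x => by
    simp [mul_sub, sub_eq_zero])

/-- The annihilator of `r` has as many elements as the quotient by `⟨r⟩`. -/
theorem card_annihilator_eq_card_quotient {R : Type} [CommRing R] [Finite R] (r : R) :
    Nat.card {x : R // r * x = 0} = Nat.card (R ⧸ Ideal.span ({r} : Set R)) := by
  have h₁ : Nat.card R = Nat.card (Ideal.span ({r} : Set R)) * Nat.card {x : R // r * x = 0} := by
    refine card_eq_card_mul_of_card_fiber
      (fun x => ⟨r * x, Ideal.mem_span_singleton.2 (dvd_mul_right r x)⟩) _ ?_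
    rintro ⟨b, hb⟩
    obtain ⟨x₀, rfl⟩ := Ideal.mem_span_singleton.1 hb
    simpa only [Subtype.mk.injEq] using card_mul_eq_mul r x₀
  have h₂ := Submodule.card_eq_card_quotient_mul_card (Ideal.span ({r} : Set R))
  have hpos : 0 < Nat.card (Ideal.span ({r} : Set R)) := Nat.card_pos
  refine Nat.eq_of_mul_eq_mul_left hpos ?_
  rw [← h₁, h₂, mul_comm]

/-- In a finite local ring with maximal ideal `⟨γ⟩`, the annihilator of a nonzero power `γ ^ t`
has `|R ⧸ ⟨γ⟩| ^ t` elements. -/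
theorem card_annihilator_pow {R : Type} [CommRing R] [IsLocalRing R] [Finite R] (γ : R)
    (hmax : IsLocalRing.maximalIdeal R = Ideal.span {γ}) (t : ℕ) (ht : γ ^ t ≠ 0) :
    Nat.card {x : R // γ ^ t * x = 0} = Nat.card (R ⧸ Ideal.span ({γ} : Set R)) ^ t := by
  induction t with
  | zero => simp
  | succ t ih =>
    have ht' : γ ^ t ≠ 0 := fun h => ht (by rw [pow_succ, h, zero_mul])
    rw [pow_succ (Nat.card _), ← ih ht', ← card_annihilator_eq_card_quotient]
    refine card_eq_card_mul_of_card_fiber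
      (fun x : {x : R // γ ^ (t + 1) * x = 0} =>
        (⟨γ * x, by rw [← mul_assoc, ← pow_succ]; exact x.2⟩ : {x : R // γ ^ t * x = 0})) _ ?_
    rintro ⟨b, hb⟩
    have hbγ : b ∈ Ideal.span ({γ} : Set R) := by
      rw [← hmax, IsLocalRing.mem_maximalIdeal, mem_nonunits_iff]
      exact fun hu => ht' (hu.mul_left_eq_zero.1 hb)
    obtain ⟨x₀, rfl⟩ := Ideal.mem_span_singleton.1 hbγ
    rw [← card_mul_eq_mul γ x₀]
    simp only [Subtype.mk.injEq]
    refine Nat.card_congr (Equiv.subtypeSubtypeEquivSubtype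
      (q := fun x => γ * x = γ * x₀) fun {x} hx => ?_)
    rw [pow_succ, mul_assoc, hx, hb]


/-- Let `c ∈ R^n`, `m ≥ 1`, and let `λ ∈ R` be nonzero with valuation
`ν(λ) = t`. If every element of `⟨γ⟩` occurs exactly `m` times among the coordinates of `c`,
then every element of `⟨γ^(t+1)⟩` occurs exactly `q^t·m` times among the coordinates of
`λ·c`, and each remaining coordinate of `λ·c` lies in `⟨γ^t⟩ \ ⟨γ^(t+1)⟩`. -/
theorem stmt_10
    (R : Type) [CommRing R] [IsLocalRing R] [Fintype R]
    (γ : R) (s q : ℕ)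
    (hs : 1 ≤ s)
    (hmax : IsLocalRing.maximalIdeal R = Ideal.span {γ})
    (hnil : γ ^ s = 0)
    (hnil' : 2 ≤ s → γ ^ (s - 1) ≠ 0)
    (hq : Nat.card (R ⧸ Ideal.span ({γ} : Set R)) = q)
    (n : ℕ) (hn : 1 ≤ n) (c : Fin n → R)
    (m : ℕ) (hm : 1 ≤ m)
    (lam : R) (hlam : lam ≠ 0) (t : ℕ)
    (ht1 : lam ∈ Ideal.span ({γ ^ t} : Set R))
    (ht2 : lam ∉ Ideal.span ({γ ^ (t + 1)} : Set R))
    (hc : ∀ a ∈ Ideal.span ({γ} : Set R), Nat.card {i : Fin n // c i = a} = m) :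
    (∀ b ∈ Ideal.span ({γ ^ (t + 1)} : Set R),
      Nat.card {i : Fin n // lam * c i = b} = q ^ t * m) ∧
    (∀ i : Fin n, lam * c i ∉ Ideal.span ({γ ^ (t + 1)} : Set R) →
      lam * c i ∈ Ideal.span ({γ ^ t} : Set R)) := by
  obtain ⟨u, rfl⟩ := Ideal.mem_span_singleton.1 ht1
  have isUnit_of_not_mem {x : R} (hx : x ∉ Ideal.span ({γ} : Set R)) : IsUnit x := by
    rwa [← hmax, IsLocalRing.mem_maximalIdeal, mem_nonunits_iff, not_not] at hx
  have hu : IsUnit u := isUnit_of_not_mem fun h => ht2 <| by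
    rw [Ideal.mem_span_singleton] at h ⊢
    exact pow_succ γ t ▸ mul_dvd_mul_left _ h
  refine ⟨fun b hb => ?_, fun i _ => Ideal.mul_mem_right _ _ ht1⟩
  have mem_of_mul_eq {x : R} (hx : γ ^ t * u * x = b) : x ∈ Ideal.span ({γ} : Set R) := by
    by_contra h
    refine ht2 ?_
    rw [Ideal.mem_span_singleton] at hb ⊢
    exact (isUnit_of_not_mem h).dvd_mul_right.1 (hx ▸ hb)
  have hker : Nat.card {x : R // γ ^ t * u * x = b} = q ^ t := by
    obtain ⟨d, rfl⟩ := Ideal.mem_span_singleton.1 hb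
    obtain ⟨u, rfl⟩ := hu
    have hd : γ ^ (t + 1) * d = γ ^ t * u * (↑u⁻¹ * (γ * d)) := by
      rw [mul_assoc, Units.mul_inv_cancel_left, pow_succ, mul_assoc]
    rw [hd, card_mul_eq_mul, ← hq,
      ← card_annihilator_pow γ hmax t fun h => hlam (by rw [h, zero_mul])]
    refine Nat.card_congr (Equiv.subtypeEquivRight fun x => ?_)
    rw [mul_right_comm, Units.mul_left_eq_zero]
  rw [← hker]
  refine card_eq_card_mul_of_card_fiber
    (fun i : {i : Fin n // γ ^ t * u * c i = b} =>
      (⟨c i, i.2⟩ : {x : R // γ ^ t * u * x = b})) m ?_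
  rintro ⟨a, ha⟩
  rw [← hc a (mem_of_mul_eq ha)]
  simp only [Subtype.mk.injEq]
  exact Nat.card_congr (Equiv.subtypeSubtypeEquivSubtype (q := fun i => c i = a)
    fun {i} hi => hi ▸ ha)
end

section
/- Let k ≥ 2, let D ⊆ R^k be a β-column set, and let x ∈ R^k be nonzero with valuation ν(x) = t. Then the Hamming weight of the codeword (x·g)_{g∈D} of S_k^β, i.e. the number of g ∈ D with x·g ≠ 0, equals L_β(k) − q^t·L_β(k−1). -/
/-- A β-column set: a finite set `D ⊆ R^k` such that every `g ∈ D` has a unit coordinate,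
and every vector of `R^k` with a unit coordinate is `u • g` for a unique unit `u` and a
unique `g ∈ D`. -/
def IsBetaColumnSet {R : Type} [CommRing R] {k : ℕ} (D : Finset (Fin k → R)) : Prop :=
  (∀ g ∈ D, ∃ i, IsUnit (g i)) ∧
  (∀ w : Fin k → R, (∃ i, IsUnit (w i)) →
    ∃! ug : Rˣ × (Fin k → R), ug.2 ∈ D ∧ w = (ug.1 : R) • ug.2)

/-- `L_β(j) = q^((s−1)(j−1))·(q^j − 1)/(q − 1)`, written via the geometric sum. -/
def Lbeta (q s j : ℕ) : ℕ := q ^ ((s - 1) * (j - 1)) * ∑ i ∈ Finset.range j, q ^ i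

/-- The preimage of a submodule `N` of the range of `f` has `|ker f| * |N|` elements. -/
theorem LinearMap.card_comap_eq_card_ker_mul {R M M' : Type*} [Ring R] [AddCommGroup M]
    [Module R M] [AddCommGroup M'] [Module R M'] (f : M →ₗ[R] M') (N : Submodule R M')
    (hN : N ≤ LinearMap.range f) :
    Nat.card (N.comap f) = Nat.card (LinearMap.ker f) * Nat.card N := by
  let g : N.comap f →ₗ[R] N := f.restrict fun _ h => h
  have hg : Function.Surjective g := by
    rintro ⟨n, hn⟩
    obtain ⟨m, rfl⟩ := hN hn
    exact ⟨⟨m, hn⟩, rfl⟩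
  have hker : Nat.card (LinearMap.ker g) = Nat.card (LinearMap.ker f) := by
    refine Nat.card_congr ⟨fun a => ⟨a.1.1, congrArg Subtype.val a.2⟩,
      fun a => ⟨⟨a.1, ?_⟩, Subtype.ext a.2⟩, fun _ => rfl, fun _ => rfl⟩
    have ha : f a.1 = 0 := a.2
    simp [ha]
  rw [Submodule.card_eq_card_quotient_mul_card (LinearMap.ker g), hker,
    Nat.card_congr (g.quotKerEquivOfSurjective hg).toEquiv, mul_comm]

section ChainRing

variable {R : Type} [CommRing R] {γ : R} {s : ℕ}

theorem mem_ker_toSpanSingleton_pow {a : R} {j : ℕ} :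
    a ∈ LinearMap.ker (LinearMap.toSpanSingleton R R (γ ^ j)) ↔ a * γ ^ j = 0 := by
  simp

variable [IsLocalRing R]

theorem generator_pow_ne_zero (hs : 1 ≤ s) (hnil' : 2 ≤ s → γ ^ (s - 1) ≠ 0) {j : ℕ}
    (hj : j < s) : γ ^ j ≠ 0 := by
  rcases Nat.lt_or_ge s 2 with h | h
  · obtain rfl : j = 0 := by omega
    simp
  · intro h0
    exact hnil' h (pow_eq_zero_of_le (by omega) h0)

theorem ker_pow_le_maximalIdeal {j : ℕ} (hj : γ ^ j ≠ 0) :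
    LinearMap.ker (LinearMap.toSpanSingleton R R (γ ^ j)) ≤ IsLocalRing.maximalIdeal R := by
  intro a ha
  rw [mem_ker_toSpanSingleton_pow] at ha
  rw [IsLocalRing.mem_maximalIdeal, mem_nonunits_iff]
  exact fun hu => hj (hu.mul_right_eq_zero.mp ha)

/-- In a finite chain ring, the annihilator of `γ ^ j` has `q ^ j` elements. -/
theorem card_ker_pow [Finite R] (hmax : IsLocalRing.maximalIdeal R = Ideal.span {γ})
    (hγ : ∀ j < s, γ ^ j ≠ 0) {j : ℕ} (hj : j ≤ s) :
    Nat.card (LinearMap.ker (LinearMap.toSpanSingleton R R (γ ^ j)))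
      = Nat.card (R ⧸ Ideal.span ({γ} : Set R)) ^ j := by
  have hrange : LinearMap.range (LinearMap.toSpanSingleton R R γ) = Ideal.span {γ} :=
    LinearMap.range_toSpanSingleton γ
  have hone : Nat.card (LinearMap.ker (LinearMap.toSpanSingleton R R γ))
      = Nat.card (R ⧸ Ideal.span ({γ} : Set R)) := by
    have h1 := LinearMap.card_comap_eq_card_ker_mul (LinearMap.toSpanSingleton R R γ)
      (Submodule.span R {γ}) hrange.ge
    have h2 := Submodule.card_eq_card_quotient_mul_card (Ideal.span ({γ} : Set R))
    have h3 : Nat.card ((Submodule.span R {γ}).comap (LinearMap.toSpanSingleton R R γ))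
        = Nat.card R := by
      rw [← LinearMap.range_toSpanSingleton]
      exact Nat.card_congr (Equiv.subtypeUnivEquiv fun a => LinearMap.mem_range_self _ a)
    rw [h3, h2, mul_comm] at h1
    exact (Nat.eq_of_mul_eq_mul_right Nat.card_pos h1).symm
  induction j with
  | zero =>
    have : LinearMap.ker (LinearMap.toSpanSingleton R R (γ ^ 0)) = ⊥ := by
      ext a; simp
    rw [this]; simp
  | succ j ih =>
    have hcomap : LinearMap.ker (LinearMap.toSpanSingleton R R (γ ^ (j + 1)))
        = (LinearMap.ker (LinearMap.toSpanSingleton R R (γ ^ j))).comap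
          (LinearMap.toSpanSingleton R R γ) := by
      ext a
      simp [pow_succ', mul_assoc]
    rw [hcomap, LinearMap.card_comap_eq_card_ker_mul, hone, ih (by omega), pow_succ']
    rw [hrange, ← hmax]
    exact ker_pow_le_maximalIdeal (hγ j (by omega))

end ChainRing

/-- A linear form with a unit coefficient takes values in `I` at `|I| * |J| ^ (k - 1)` of the
vectors with all coordinates in an ideal `J ≥ I`. -/
theorem card_pi_ideal_dotProduct_mem {R : Type*} [CommRing R] [Finite R] {k : ℕ}
    {I J : Ideal R} (hIJ : I ≤ J) (y : Fin k → R) {i₀ : Fin k} (hy : IsUnit (y i₀)) :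
    Nat.card {w : Fin k → R // (∀ i, w i ∈ J) ∧ ∑ i, y i * w i ∈ I}
      = Nat.card I * Nat.card J ^ (k - 1) := by
  obtain ⟨u, hu⟩ := hy
  have hsum (w : Fin k → R) : ∑ i, y i * w i
      = u * w i₀ + ∑ i ∈ Finset.univ.erase i₀, y i * w i := by
    rw [hu, Finset.add_sum_erase _ (fun i => y i * w i) (Finset.mem_univ i₀)]
  have hrest (w : Fin k → R) (a : R) :
      ∑ i ∈ Finset.univ.erase i₀, y i * Function.update w i₀ a i
        = ∑ i ∈ Finset.univ.erase i₀, y i * w i :=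
    Finset.sum_congr rfl fun i hi => by
      rw [Function.update_of_ne (Finset.ne_of_mem_erase hi)]
  let B : Fin k → Ideal R := Function.update (fun _ => J) i₀ I
  have hB : ∀ i, i ≠ i₀ → B i = J := fun i hi => Function.update_of_ne hi _ _
  have hB₀ : B i₀ = I := Function.update_self _ _ _
  have hBJ : ∀ i, B i ≤ J := fun i => by
    by_cases h : i = i₀
    · rw [h, hB₀]; exact hIJ
    · rw [hB i h]
  let e : {w : Fin k → R // (∀ i, w i ∈ J) ∧ ∑ i, y i * w i ∈ I}
      ≃ {v : Fin k → R // ∀ i, v i ∈ B i} :=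
    { toFun := fun w => ⟨Function.update w.1 i₀ (∑ i, y i * w.1 i), fun i => by
        by_cases h : i = i₀
        · subst h
          rw [hB₀, Function.update_self]; exact w.2.2
        · rw [hB i h, Function.update_of_ne h]; exact w.2.1 i⟩
      invFun := fun v => ⟨Function.update v.1 i₀
          (↑u⁻¹ * (v.1 i₀ - ∑ i ∈ Finset.univ.erase i₀, y i * v.1 i)), fun i => by
        by_cases h : i = i₀
        · subst h
          rw [Function.update_self]
          exact J.mul_mem_left _ (J.sub_mem (hBJ _ (v.2 _))
            (J.sum_mem fun i _ => J.mul_mem_left _ (hBJ i (v.2 i))))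
        · rw [Function.update_of_ne h]; exact hBJ i (v.2 i), by
        rw [hsum, hrest, Function.update_self, Units.mul_inv_cancel_left, sub_add_cancel, ← hB₀]
        exact v.2 i₀⟩
      left_inv := fun w => by
        apply Subtype.ext
        simp only [hrest, Function.update_self, Function.update_idem]
        rw [hsum, add_sub_cancel_right, Units.inv_mul_cancel_left, Function.update_eq_self]
      right_inv := fun v => by
        apply Subtype.ext
        simp only [hsum, hrest, Function.update_self, Function.update_idem,
          Units.mul_inv_cancel_left, sub_add_cancel, Function.update_eq_self] }
  rw [Nat.card_congr e, Nat.card_congr (Equiv.subtypePiEquivPi (p := fun i a => a ∈ B i)),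
    Nat.card_pi, ← Finset.mul_prod_erase _ _ (Finset.mem_univ i₀)]
  congr 1
  · exact congrArg (fun K : Ideal R => Nat.card K) hB₀
  · rw [Finset.prod_congr rfl fun i hi =>
      congrArg (fun K : Ideal R => Nat.card K) (hB i (Finset.ne_of_mem_erase hi))]
    simp

/-- Splitting the vectors satisfying a predicate into unimodular vectors and vectors over the maximal
ideal. -/
theorem card_unimodular_add_card_maximalIdeal {R : Type*} [CommRing R] [IsLocalRing R] [Finite R]
    {k : ℕ} (P : (Fin k → R) → Prop) :
    Nat.card {w : Fin k → R // (∃ i, IsUnit (w i)) ∧ P w}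
      + Nat.card {w : Fin k → R // (∀ i, w i ∈ IsLocalRing.maximalIdeal R) ∧ P w}
      = Nat.card {w : Fin k → R // P w} := by
  classical
  rw [← Nat.card_sum]
  refine Nat.card_congr ((Equiv.sumCongr ?_ ?_).trans
    (Equiv.sumCompl fun w : {w : Fin k → R // P w} => ∃ i, IsUnit (w.1 i)))
  · exact (Equiv.subtypeEquivRight fun _ => and_comm).trans
      (Equiv.subtypeSubtypeEquivSubtypeInter P fun w => ∃ i, IsUnit (w i)).symm
  · refine (Equiv.subtypeEquivRight fun w => ?_).trans
      (Equiv.subtypeSubtypeEquivSubtypeInter P fun w => ¬ ∃ i, IsUnit (w i)).symm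
    simp [and_comm]

/-- A property invariant under unit scaling holds for `|Rˣ|` times as many unimodular vectors
as elements of a β-column set. -/
theorem IsBetaColumnSet.card_units_mul {R : Type} [CommRing R] {k : ℕ}
    {D : Finset (Fin k → R)} (hD : IsBetaColumnSet D) (P : (Fin k → R) → Prop)
    (hP : ∀ (u : Rˣ) w, P ((u : R) • w) ↔ P w) :
    Nat.card Rˣ * Nat.card {g : Fin k → R // g ∈ D ∧ P g}
      = Nat.card {w : Fin k → R // (∃ i, IsUnit (w i)) ∧ P w} := by
  have hunit (u : Rˣ) (g : Fin k → R) (hg : g ∈ D) : ∃ i, IsUnit (((u : R) • g) i) := by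
    obtain ⟨i, hi⟩ := hD.1 g hg
    exact ⟨i, u.isUnit.mul hi⟩
  rw [← Nat.card_prod]
  refine Nat.card_eq_of_bijective (fun a : Rˣ × {g : Fin k → R // g ∈ D ∧ P g} =>
    (⟨(a.1 : R) • a.2.1, hunit _ _ a.2.2.1, (hP _ _).2 a.2.2.2⟩ :
      {w : Fin k → R // (∃ i, IsUnit (w i)) ∧ P w})) ⟨?_, ?_⟩
  · rintro ⟨u, g, hg, hPg⟩ ⟨v, h, hh, hPh⟩ huv
    have huv' : (u : R) • g = (v : R) • h := congrArg Subtype.val huv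
    have := (hD.2 _ (hunit u g hg)).unique (y₁ := (u, g)) (y₂ := (v, h)) ⟨hg, rfl⟩ ⟨hh, huv'⟩
    obtain ⟨rfl, rfl⟩ := Prod.mk.inj this
    rfl
  · rintro ⟨w, hw, hPw⟩
    obtain ⟨⟨u, g⟩, ⟨hg, rfl⟩, -⟩ := hD.2 w hw
    exact ⟨(u, ⟨g, hg, (hP _ _).1 hPw⟩), rfl⟩

theorem IsLocalRing.card_units_add_card_maximalIdeal {R : Type*} [CommRing R] [IsLocalRing R]
    [Finite R] : Nat.card Rˣ + Nat.card (IsLocalRing.maximalIdeal R) = Nat.card R := by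
  classical
  rw [← Nat.card_sum]
  refine Nat.card_congr ((Equiv.sumCongr ?_ ?_).trans (Equiv.sumCompl fun a : R => IsUnit a))
  · exact Equiv.ofBijective (fun u : Rˣ => (⟨u, u.isUnit⟩ : {a : R // IsUnit a}))
      ⟨fun u v h => Units.ext (congrArg Subtype.val h), fun a => ⟨a.2.unit, rfl⟩⟩
  · exact Equiv.subtypeEquivRight fun a => by simp

/-- `L_β(j)` is the quotient of `(q ^ s) ^ j - (q ^ (s - 1)) ^ j` by `n = q ^ s - q ^ (s - 1)`. -/
theorem mul_Lbeta {q s n j : ℕ} (hs : 1 ≤ s) (hj : 1 ≤ j) (hn : n + q ^ (s - 1) = q ^ s) :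
    n * Lbeta q s j + (q ^ (s - 1)) ^ j = (q ^ s) ^ j := by
  obtain ⟨s, rfl⟩ := Nat.exists_eq_add_of_le' hs
  obtain ⟨j, rfl⟩ := Nat.exists_eq_add_of_le' hj
  simp only [Lbeta, Nat.add_sub_cancel] at *
  have hgeom := geom_sum_mul (q : ℤ) (j + 1)
  zify at hn ⊢
  have hn' : (n : ℤ) = q ^ s * (q - 1) := by rw [pow_succ] at hn; linear_combination hn
  rw [hn']
  linear_combination ((q : ℤ) ^ s) ^ (j + 1) * hgeom

/-- For `k ≥ 2`, a β-column set `D ⊆ R^k`, and nonzero `x ∈ R^k` with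
valuation `ν(x) = t`, the Hamming weight of the codeword `(x·g)_{g∈D}` of `S_k^β` equals
`L_β(k) − q^t·L_β(k−1)`. -/
theorem stmt_12
    (R : Type) [CommRing R] [IsLocalRing R] [Fintype R]
    (γ : R) (s q : ℕ)
    (hs : 1 ≤ s)
    (hmax : IsLocalRing.maximalIdeal R = Ideal.span {γ})
    (hnil : γ ^ s = 0)
    (hnil' : 2 ≤ s → γ ^ (s - 1) ≠ 0)
    (hq : Nat.card (R ⧸ Ideal.span ({γ} : Set R)) = q)
    (k : ℕ) (hk : 2 ≤ k)
    (D : Finset (Fin k → R)) (hD : IsBetaColumnSet D)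
    (x : Fin k → R) (hx : x ≠ 0) (t : ℕ)
    (hval1 : ∀ i, x i ∈ Ideal.span ({γ ^ t} : Set R))
    (hval2 : ∃ i, x i ∉ Ideal.span ({γ ^ (t + 1)} : Set R)) :
    Nat.card {g : Fin k → R // g ∈ D ∧ ∑ i, x i * g i ≠ 0}
      = Lbeta q s k - q ^ t * Lbeta q s (k - 1) := by
  have hγ : ∀ j < s, γ ^ j ≠ 0 := fun j hj => generator_pow_ne_zero hs hnil' hj
  have hts : t < s := by
    by_contra! h
    obtain ⟨i, hi⟩ := hval2
    have hz : x i = 0 := by simpa [pow_eq_zero_of_le h hnil] using hval1 i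
    exact hi (hz ▸ zero_mem _)
  choose y hy using fun i => Ideal.mem_span_singleton'.mp (hval1 i)
  obtain ⟨i₀, hi₀⟩ : ∃ i, IsUnit (y i) := by
    obtain ⟨i, hi⟩ := hval2
    refine ⟨i, ?_⟩
    by_contra hu
    have hm : y i ∈ Ideal.span {γ} := hmax ▸ (IsLocalRing.mem_maximalIdeal _).2 hu
    obtain ⟨r, hr⟩ := Ideal.mem_span_singleton'.mp hm
    exact hi (Ideal.mem_span_singleton'.mpr ⟨r, by rw [← hy, ← hr]; ring⟩)
  have hR : Nat.card R = q ^ s := by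
    rw [← hq, ← card_ker_pow hmax hγ le_rfl, hnil]
    simp
  have hqpos : 0 < q := hq ▸ Nat.card_pos
  have hm : Nat.card (IsLocalRing.maximalIdeal R) = q ^ (s - 1) := by
    have h := Submodule.card_eq_card_quotient_mul_card (Ideal.span ({γ} : Set R))
    rw [hq, hR] at h
    rw [hmax]
    obtain ⟨s, rfl⟩ := Nat.exists_eq_add_of_le' hs
    rw [pow_succ] at h
    exact (Nat.eq_of_mul_eq_mul_right hqpos h).symm
  have hunits : Nat.card Rˣ + q ^ (s - 1) = q ^ s := by
    rw [← hm, ← hR, IsLocalRing.card_units_add_card_maximalIdeal]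
  have hupos : 0 < Nat.card Rˣ := Nat.card_pos
  have hall : Nat.card {g : Fin k → R // g ∈ D} = Lbeta q s k := by
    have h := hD.card_units_mul (fun _ => True) fun _ _ => Iff.rfl
    have h' := card_unimodular_add_card_maximalIdeal (R := R) (k := k) fun _ => True
    have h'' : Nat.card {w : Fin k → R // (∀ i, w i ∈ IsLocalRing.maximalIdeal R) ∧ True}
        = (q ^ (s - 1)) ^ k := by
      simp only [and_true]
      rw [Nat.card_congr (Equiv.subtypePiEquivPi
        (p := fun _ a => a ∈ IsLocalRing.maximalIdeal R)), Nat.card_fun, hm, Nat.card_fin]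
    rw [← h, h'', Nat.card_congr (Equiv.subtypeUnivEquiv fun _ => trivial), Nat.card_fun,
      hR, Nat.card_fin, ← mul_Lbeta hs (by omega) hunits] at h'
    simpa using Nat.eq_of_mul_eq_mul_left hupos (Nat.add_right_cancel h')
  have hzero : Nat.card {g : Fin k → R // g ∈ D ∧ ∑ i, x i * g i = 0}
      = q ^ t * Lbeta q s (k - 1) := by
    have h := hD.card_units_mul (fun g => ∑ i, x i * g i = 0) fun u w => by
      have : ∑ i, x i * ((u : R) • w) i = u * ∑ i, x i * w i := by
        rw [Finset.mul_sum]
        exact Finset.sum_congr rfl fun i _ => by simp only [Pi.smul_apply, smul_eq_mul]; ring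
      rw [this, Units.mul_right_eq_zero]
    have h' := card_unimodular_add_card_maximalIdeal (R := R) (k := k)
      fun g => ∑ i, x i * g i = 0
    let I : Ideal R := LinearMap.ker (LinearMap.toSpanSingleton R R (γ ^ t))
    have hI : Nat.card I = q ^ t := by rw [← hq]; exact card_ker_pow hmax hγ hts.le
    have hiff (w : Fin k → R) : ∑ i, x i * w i = 0 ↔ ∑ i, y i * w i ∈ I := by
      rw [mem_ker_toSpanSingleton_pow, Finset.sum_mul]
      simp only [← hy, mul_right_comm]
    have hmI := card_pi_ideal_dotProduct_mem (ker_pow_le_maximalIdeal (hγ t hts)) y hi₀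
    have hRI := card_pi_ideal_dotProduct_mem (le_top : I ≤ ⊤) y hi₀
    have htop : Nat.card (⊤ : Ideal R) = q ^ s := by
      rw [← hR]; exact Nat.card_congr (Equiv.Set.univ R)
    rw [htop, hI] at hRI
    simp only [Submodule.mem_top, implies_true, true_and] at hRI
    rw [← h] at h'
    simp only [hiff] at h' ⊢
    rw [hRI, hmI, hI, hm, ← mul_Lbeta hs (by omega) hunits, mul_add] at h'
    refine Nat.eq_of_mul_eq_mul_left hupos ?_
    rw [Nat.add_right_cancel h']
    ring
  have hsplit : Nat.card {g : Fin k → R // g ∈ D ∧ ∑ i, x i * g i ≠ 0}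
      + Nat.card {g : Fin k → R // g ∈ D ∧ ∑ i, x i * g i = 0}
      = Nat.card {g : Fin k → R // g ∈ D} := by
    classical
    simp only [Nat.card_eq_fintype_card, Fintype.card_subtype, ← Finset.filter_filter]
    rw [add_comm, Finset.card_filter_add_card_filter_not]
  rw [← hall, ← hzero, ← hsplit, Nat.add_sub_cancel]
end

section
/- Let k ≥ 2, let D ⊆ R^k be a β-column set, and let x ∈ R^k be nonzero. If ν(x) = s−1, then ∑_{g∈D} w_Hom(x·g) = q^(sk−1); if ν(x) < s−1 (which forces s ≥ 2), then ∑_{g∈D} w_Hom(x·g) = q^(sk−k−1)·(q^k − 1). -/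
/-- The hypotheses making `R` a finite chain ring with maximal ideal `⟨γ⟩`, nilpotency
index `s` and residue field of cardinality `q`. -/
structure IsChainRing (R : Type) [CommRing R] [IsLocalRing R] (γ : R) (s q : ℕ) : Prop where
  one_le : 1 ≤ s
  maximalIdeal_eq : IsLocalRing.maximalIdeal R = Ideal.span {γ}
  pow_eq_zero : γ ^ s = 0
  pow_pred_ne_zero : γ ^ (s - 1) ≠ 0
  card_quotient : Nat.card (R ⧸ Ideal.span ({γ} : Set R)) = q

namespace IsChainRing

variable {R : Type} [CommRing R] [IsLocalRing R] {γ : R} {s q : ℕ}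

lemma isUnit_iff (h : IsChainRing R γ s q) {y : R} :
    IsUnit y ↔ y ∉ Ideal.span ({γ} : Set R) := by
  rw [← h.maximalIdeal_eq, IsLocalRing.mem_maximalIdeal, mem_nonunits_iff, not_not]

lemma exists_unit_mul_pow (h : IsChainRing R γ s q) {y : R} (hy : y ≠ 0) :
    ∃ u : Rˣ, ∃ j < s, y = u * γ ^ j := by
  by_contra! hcon
  have hdvd : ∀ j ≤ s, γ ^ j ∣ y := by
    intro j
    induction j with
    | zero => simp
    | succ j ih =>
      intro hj
      obtain ⟨c, hc⟩ := ih (by omega)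
      have hcu : ¬ IsUnit c := by
        rintro ⟨u, rfl⟩
        exact hcon u j (by omega) (by rw [hc, mul_comm])
      rw [h.isUnit_iff, not_not, Ideal.mem_span_singleton] at hcu
      obtain ⟨d, rfl⟩ := hcu
      exact ⟨d, by rw [hc]; ring⟩
  have := hdvd s le_rfl
  rw [h.pow_eq_zero, zero_dvd_iff] at this
  exact hy this

lemma dvd_pow_pred (h : IsChainRing R γ s q) {y : R} (hy : y ≠ 0) : y ∣ γ ^ (s - 1) := by
  obtain ⟨u, j, hj, rfl⟩ := h.exists_unit_mul_pow hy
  rw [Units.mul_left_dvd]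
  exact pow_dvd_pow _ (by omega)

lemma mul_eq_zero_iff (h : IsChainRing R γ s q) {y : R} :
    γ * y = 0 ↔ y ∈ Ideal.span ({γ ^ (s - 1)} : Set R) := by
  have hs := h.one_le
  rw [Ideal.mem_span_singleton]
  constructor
  · intro hy
    by_cases hy0 : y = 0
    · simp [hy0]
    obtain ⟨u, j, hj, rfl⟩ := h.exists_unit_mul_pow hy0
    have h0 : γ ^ (j + 1) = 0 := by
      rw [← Units.mul_right_eq_zero u, ← hy]; ring
    have : s ≤ j + 1 := by
      by_contra! hlt
      exact h.pow_pred_ne_zero (pow_eq_zero_of_le (by omega) h0)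
    exact Dvd.dvd.mul_left (pow_dvd_pow _ (by omega)) _
  · rintro ⟨c, rfl⟩
    rw [← mul_assoc, ← pow_succ', Nat.sub_add_cancel hs, h.pow_eq_zero, zero_mul]

lemma card_socle (h : IsChainRing R γ s q) :
    Nat.card (Ideal.span ({γ ^ (s - 1)} : Set R)) = q := by
  have hker : LinearMap.ker (LinearMap.toSpanSingleton R R (γ ^ (s - 1))) =
      Ideal.span ({γ} : Set R) := by
    ext y
    rw [LinearMap.mem_ker, LinearMap.toSpanSingleton_apply, smul_eq_mul]
    constructor
    · intro hy
      by_contra hn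
      obtain ⟨u, rfl⟩ := h.isUnit_iff.2 hn
      exact h.pow_pred_ne_zero (by simpa using hy)
    · rw [Ideal.mem_span_singleton]
      rintro ⟨c, rfl⟩
      rw [mul_right_comm, ← pow_succ', Nat.sub_add_cancel h.one_le, h.pow_eq_zero, zero_mul]
  have hrange : LinearMap.range (LinearMap.toSpanSingleton R R (γ ^ (s - 1))) =
      Ideal.span ({γ ^ (s - 1)} : Set R) := LinearMap.range_toSpanSingleton _
  rw [← h.card_quotient, ← hker, ← hrange]
  exact (Nat.card_congr (LinearMap.quotKerEquivRange _).toEquiv).symm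

lemma card_span_pow (h : IsChainRing R γ s q) (n : ℕ) (hn : n ≤ s) :
    Nat.card (Ideal.span ({γ ^ (s - n)} : Set R)) = q ^ n := by
  induction n with
  | zero => simp [h.pow_eq_zero]
  | succ n ih =>
    set I := Ideal.span ({γ ^ (s - (n + 1))} : Set R) with hI
    let f : I →ₗ[R] R := (LinearMap.mulLeft R γ).comp I.subtype
    have hrange : LinearMap.range f = Ideal.span ({γ ^ (s - n)} : Set R) := by
      ext y
      rw [Ideal.mem_span_singleton, show s - n = s - (n + 1) + 1 by omega, pow_succ']
      constructor
      · rintro ⟨⟨z, hz⟩, rfl⟩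
        exact mul_dvd_mul_left _ (Ideal.mem_span_singleton.1 hz)
      · rintro ⟨c, rfl⟩
        exact ⟨⟨γ ^ (s - (n + 1)) * c, Ideal.mem_span_singleton.2 ⟨c, rfl⟩⟩,
          (mul_assoc _ _ _).symm⟩
    have hle : Ideal.span ({γ ^ (s - 1)} : Set R) ≤ I := by
      rw [hI, Ideal.span_singleton_le_span_singleton]
      exact pow_dvd_pow _ (by omega)
    have hker : LinearMap.ker f =
        Submodule.comap I.subtype (Ideal.span ({γ ^ (s - 1)} : Set R)) := by
      ext y
      exact h.mul_eq_zero_iff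
    have hcard : Nat.card (LinearMap.ker f) = q := by
      rw [hker, ← h.card_socle]
      exact Nat.card_congr (Submodule.comapSubtypeEquivOfLe hle).toEquiv
    rw [Submodule.card_eq_card_quotient_mul_card (LinearMap.ker f), hcard,
      Nat.card_congr (LinearMap.quotKerEquivRange f).toEquiv, hrange, ih (by omega), pow_succ,
      mul_comm]

lemma card_eq (h : IsChainRing R γ s q) : Nat.card R = q ^ s := by
  rw [← h.card_span_pow s le_rfl, Nat.sub_self, pow_zero, Ideal.span_singleton_one]
  exact (Nat.card_congr Submodule.topEquiv.toEquiv).symm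

lemma card_maximalIdeal (h : IsChainRing R γ s q) :
    Nat.card (Ideal.span ({γ} : Set R)) = q ^ (s - 1) := by
  have hs := h.one_le
  simpa [show s - (s - 1) = 1 by omega] using h.card_span_pow (s - 1) (by omega)

variable [Fintype R]

lemma one_lt (h : IsChainRing R γ s q) : 1 < q := by
  have : Nontrivial (R ⧸ Ideal.span ({γ} : Set R)) := by
    rw [← h.maximalIdeal_eq]
    exact Ideal.Quotient.nontrivial_iff.2 (IsLocalRing.maximalIdeal.isMaximal R).ne_top
  rw [← h.card_quotient]
  exact Finite.one_lt_card

lemma card_units (h : IsChainRing R γ s q) : Nat.card Rˣ = (q - 1) * q ^ (s - 1) := by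
  classical
  have hs := h.one_le
  have hsum : Nat.card Rˣ + Nat.card (Ideal.span ({γ} : Set R)) = Nat.card R := by
    have hu : Nat.card Rˣ = Nat.card {y : R // ¬ y ∈ Ideal.span ({γ} : Set R)} := by
      refine Nat.card_congr (Equiv.ofBijective
        (fun u => ⟨u, h.isUnit_iff.1 u.isUnit⟩) ⟨?_, ?_⟩)
      · intro u v huv
        exact Units.ext (congrArg Subtype.val huv)
      · rintro ⟨y, hy⟩
        obtain ⟨u, rfl⟩ := h.isUnit_iff.2 hy
        exact ⟨u, rfl⟩
    rw [hu, add_comm, ← Nat.card_sum]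
    exact Nat.card_congr (Equiv.sumCompl (· ∈ Ideal.span ({γ} : Set R)))
  rw [h.card_maximalIdeal, h.card_eq] at hsum
  have hpow : q ^ s = q * q ^ (s - 1) := by rw [← pow_succ', Nat.sub_add_cancel hs]
  rw [Nat.sub_mul, one_mul]
  omega

open Classical in
/-- The homogeneous weight has constant sum on the cosets of the socle. -/
lemma sum_wHom_add (h : IsChainRing R γ s q) (y : R) :
    ∑ t : Ideal.span ({γ ^ (s - 1)} : Set R), wHom γ s q (y + t) = (q - 1) * q ^ (s - 1) := by
  by_cases hy : y ∈ Ideal.span ({γ ^ (s - 1)} : Set R)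
  · have hshift : ∑ t : Ideal.span ({γ ^ (s - 1)} : Set R), wHom γ s q (y + t) =
        ∑ t : Ideal.span ({γ ^ (s - 1)} : Set R), wHom γ s q (t : R) :=
      Fintype.sum_equiv (Equiv.addLeft ⟨y, hy⟩) _ _ (fun t => rfl)
    have hval : ∀ t : Ideal.span ({γ ^ (s - 1)} : Set R),
        wHom γ s q (t : R) = if t = 0 then 0 else q ^ (s - 1) := by
      intro t
      have ht : (t : R) ∈ Ideal.span ({γ ^ (s - 1)} : Set R) := t.2
      by_cases h0 : t = 0 <;> simp [wHom, h0, ht]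
    have hcard := h.card_socle
    rw [Nat.card_eq_fintype_card] at hcard
    rw [hshift, Finset.sum_congr rfl (fun t _ => hval t), Finset.sum_ite, Finset.sum_const_zero,
      zero_add, Finset.sum_const, smul_eq_mul, Finset.filter_ne', Finset.card_erase_of_mem
      (Finset.mem_univ _), Finset.card_univ, hcard]
  · have hs : 2 ≤ s := by
      by_contra! hlt
      have h0 : s - 1 = 0 := by omega
      exact hy (by simp [h0])
    have hval : ∀ t : Ideal.span ({γ ^ (s - 1)} : Set R),
        wHom γ s q (y + t) = (q - 1) * q ^ (s - 2) := by
      intro t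
      have hn : y + t ∉ Ideal.span ({γ ^ (s - 1)} : Set R) := by
        rwa [Ideal.add_mem_iff_left _ t.2]
      have hn0 : y + t ≠ 0 := fun h0 => hn (h0 ▸ zero_mem _)
      rw [wHom, if_neg hn0, if_neg hn]
    have hcard := h.card_socle
    rw [Nat.card_eq_fintype_card] at hcard
    rw [Finset.sum_congr rfl (fun t _ => hval t), Finset.sum_const, Finset.card_univ, hcard,
      smul_eq_mul, mul_left_comm, ← pow_succ', show s - 2 + 1 = s - 1 by omega]

/-- The average homogeneous weight along a nonzero linear form. -/
lemma mul_sum_wHom (h : IsChainRing R γ s q) {M : Type*} [AddCommGroup M] [Module R M]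
    [Fintype M] (f : M →ₗ[R] R) (hf : f ≠ 0) :
    q * ∑ m, wHom γ s q (f m) = Nat.card M * ((q - 1) * q ^ (s - 1)) := by
  classical
  obtain ⟨m₀, hm₀⟩ : ∃ m, f m ≠ 0 := by
    by_contra! hcon
    exact hf (LinearMap.ext hcon)
  have hshift : ∀ t : Ideal.span ({γ ^ (s - 1)} : Set R),
      ∑ m, wHom γ s q (f m + t) = ∑ m, wHom γ s q (f m) := by
    rintro ⟨t, ht⟩
    obtain ⟨c, rfl⟩ := (h.dvd_pow_pred hm₀).trans (Ideal.mem_span_singleton.1 ht)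
    refine Fintype.sum_equiv (Equiv.addRight (c • m₀)) _ _ (fun m => ?_)
    simp [mul_comm]
  have hcard := h.card_socle
  rw [Nat.card_eq_fintype_card] at hcard
  calc q * ∑ m, wHom γ s q (f m)
      = ∑ t : Ideal.span ({γ ^ (s - 1)} : Set R), ∑ m, wHom γ s q (f m + t) := by
        rw [Finset.sum_congr rfl (fun t _ => hshift t), Finset.sum_const, Finset.card_univ, hcard,
          smul_eq_mul]
    _ = ∑ m, ∑ t : Ideal.span ({γ ^ (s - 1)} : Set R), wHom γ s q (f m + t) := Finset.sum_comm
    _ = Nat.card M * ((q - 1) * q ^ (s - 1)) := by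
        rw [Finset.sum_congr rfl (fun m _ => h.sum_wHom_add (f m)), Finset.sum_const,
          Finset.card_univ, smul_eq_mul, Nat.card_eq_fintype_card]

end IsChainRing

lemma wHom_unit_mul {R : Type} [CommRing R] (γ : R) (s q : ℕ) (u : Rˣ) (y : R) :
    wHom γ s q (u * y) = wHom γ s q y := by
  have h0 : (u : R) * y = 0 ↔ y = 0 := Units.mul_right_eq_zero u
  have hmem : (u : R) * y ∈ Ideal.span ({γ ^ (s - 1)} : Set R) ↔
      y ∈ Ideal.span ({γ ^ (s - 1)} : Set R) := Ideal.unit_mul_mem_iff_mem _ u.isUnit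
  unfold wHom
  congr 1
  · exact propext h0
  · congr 1
    exact propext hmem

open Classical in
lemma IsBetaColumnSet.card_units_mul_sum {R : Type} [CommRing R] [Fintype R] {k : ℕ}
    {D : Finset (Fin k → R)} (hD : IsBetaColumnSet D) (F : (Fin k → R) → ℕ)
    (hF : ∀ (u : Rˣ) w, F ((u : R) • w) = F w) :
    Nat.card Rˣ * ∑ g ∈ D, F g = ∑ w with ∃ i, IsUnit (w i), F w := by
  have hprod : ∑ ug ∈ (Finset.univ : Finset Rˣ) ×ˢ D, F ug.2 = Nat.card Rˣ * ∑ g ∈ D, F g := by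
    rw [Finset.sum_product]
    simp only [Finset.sum_const, Finset.card_univ, smul_eq_mul, Nat.card_eq_fintype_card]
  have hunit : ∀ (u : Rˣ), ∀ g ∈ D, ∃ i, IsUnit (((u : R) • g) i) := by
    intro u g hg
    obtain ⟨i, hi⟩ := hD.1 g hg
    exact ⟨i, u.isUnit.mul hi⟩
  rw [← hprod]
  refine Finset.sum_bij (fun ug _ => (ug.1 : R) • ug.2) ?_ ?_ ?_ ?_
  · rintro ⟨u, g⟩ hug
    simpa using hunit u g (Finset.mem_product.1 hug).2
  · rintro ⟨u, g⟩ hug ⟨v, g'⟩ hvg heq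
    have hg := (Finset.mem_product.1 hug).2
    exact (hD.2 _ (hunit u g hg)).unique ⟨hg, rfl⟩ ⟨(Finset.mem_product.1 hvg).2, heq⟩
  · intro w hw
    obtain ⟨ug, ⟨hg, hw'⟩, -⟩ := hD.2 w (Finset.mem_filter.1 hw).2
    exact ⟨ug, Finset.mem_product.2 ⟨Finset.mem_univ _, hg⟩, hw'.symm⟩
  · rintro ⟨u, g⟩ -
    exact (hF u g).symm

open Classical in
/-- The weight of a codeword, scaled by the number of units, plus the contribution of the
vectors without unit coordinate, is the sum over the whole of `R^k`. -/
lemma IsChainRing.card_units_mul_sum_add {R : Type} [CommRing R] [IsLocalRing R] [Fintype R]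
    {γ : R} {s q : ℕ} (h : IsChainRing R γ s q) {k : ℕ} {D : Finset (Fin k → R)}
    (hD : IsBetaColumnSet D) (x : Fin k → R) :
    (q - 1) * q ^ (s - 1) * ∑ g ∈ D, wHom γ s q (∑ i, x i * g i) +
      ∑ v : Fin k → Ideal.span ({γ} : Set R), wHom γ s q (∑ i, x i * v i) =
      ∑ w : Fin k → R, wHom γ s q (∑ i, x i * w i) := by
  rw [← h.card_units, hD.card_units_mul_sum (fun w => wHom γ s q (∑ i, x i * w i)),
    ← Finset.sum_filter_add_sum_filter_not Finset.univ (fun w : Fin k → R => ∃ i, IsUnit (w i))]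
  · congr 1
    refine Finset.sum_bij (fun v _ i => (v i : R)) ?_ ?_ ?_ ?_
    · intro v _
      simp only [Finset.mem_filter, Finset.mem_univ, true_and, not_exists, h.isUnit_iff, not_not]
      exact fun i => (v i).2
    · intro v _ v' _ hv
      funext i
      exact Subtype.ext (congrFun hv i)
    · intro w hw
      simp only [Finset.mem_filter, Finset.mem_univ, true_and, not_exists, h.isUnit_iff,
        not_not] at hw
      exact ⟨fun i => ⟨w i, hw i⟩, Finset.mem_univ _, rfl⟩
    · intro v _
      rfl
  · intro u w
    rw [← wHom_unit_mul γ s q u (∑ i, x i * w i), Finset.mul_sum]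
    refine congrArg _ (Finset.sum_congr rfl fun i _ => ?_)
    simp only [Pi.smul_apply, smul_eq_mul]
    ring

/-- For `k ≥ 2`, a β-column set `D ⊆ R^k`, and nonzero `x ∈ R^k`: if
`ν(x) = s−1` (i.e. every `x i ∈ ⟨γ^(s−1)⟩`), then the homogeneous weight of the codeword
`(x·g)_{g∈D}` is `q^(sk−1)`; if `ν(x) < s−1` (i.e. some `x i ∉ ⟨γ^(s−1)⟩`), then it is
`q^(sk−k−1)·(q^k − 1)`. -/
theorem stmt_15
    (R : Type) [CommRing R] [IsLocalRing R] [Fintype R]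
    (γ : R) (s q : ℕ)
    (hs : 1 ≤ s)
    (hmax : IsLocalRing.maximalIdeal R = Ideal.span {γ})
    (hnil : γ ^ s = 0)
    (hnil' : 2 ≤ s → γ ^ (s - 1) ≠ 0)
    (hq : Nat.card (R ⧸ Ideal.span ({γ} : Set R)) = q)
    (k : ℕ) (hk : 2 ≤ k)
    (D : Finset (Fin k → R)) (hD : IsBetaColumnSet D)
    (x : Fin k → R) (hx : x ≠ 0) :
    ((∀ i, x i ∈ Ideal.span ({γ ^ (s - 1)} : Set R)) →
      ∑ g ∈ D, wHom γ s q (∑ i, x i * g i) = q ^ (s * k - 1)) ∧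
    ((∃ i, x i ∉ Ideal.span ({γ ^ (s - 1)} : Set R)) →
      ∑ g ∈ D, wHom γ s q (∑ i, x i * g i) = q ^ (s * k - k - 1) * (q ^ k - 1)) := by
  classical
  have h : IsChainRing R γ s q := by
    refine ⟨hs, hmax, hnil, ?_, hq⟩
    rcases hs.eq_or_lt with rfl | hlt
    · simp
    · exact hnil' hlt
  have hq1 := h.one_lt
  have hpos : 0 < (q - 1) * q ^ (s - 1) :=
    Nat.mul_pos (by omega) (pow_pos (by omega) _)
  have hsum := h.card_units_mul_sum_add hD x
  set T := ∑ g ∈ D, wHom γ s q (∑ i, x i * g i)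
  have hall : q * ∑ w : Fin k → R, wHom γ s q (∑ i, x i * w i) =
      q ^ (s * k) * ((q - 1) * q ^ (s - 1)) := by
    let f : (Fin k → R) →ₗ[R] R := ∑ i, x i • LinearMap.proj i
    have hfv : ∀ w, f w = ∑ i, x i * w i := fun w => by simp [f]
    have hf : f ≠ 0 := by
      obtain ⟨i, hi⟩ := Function.ne_iff.1 hx
      intro hf0
      apply hi
      have := hfv (Pi.single i 1)
      simpa [hf0, Pi.single_apply] using this.symm
    have := h.mul_sum_wHom f hf
    simp only [hfv] at this
    rw [this, Nat.card_fun, h.card_eq, Nat.card_fin, pow_mul]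
  constructor
  · intro hsoc
    have hzero : ∑ v : Fin k → Ideal.span ({γ} : Set R), wHom γ s q (∑ i, x i * v i) = 0 := by
      refine Finset.sum_eq_zero fun v _ => ?_
      have : ∑ i, x i * (v i : R) = 0 := by
        refine Finset.sum_eq_zero fun i _ => ?_
        obtain ⟨c, hc⟩ := Ideal.mem_span_singleton.1 (v i).2
        rw [hc, ← mul_assoc, mul_comm (x i), h.mul_eq_zero_iff.2 (hsoc i), zero_mul]
      simp [this, wHom]
    rw [hzero, add_zero] at hsum
    rw [← hsum] at hall
    have hsk : 1 ≤ s * k := Nat.mul_pos hs (by omega)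
    have hT : q * T = q * q ^ (s * k - 1) := by
      rw [← pow_succ', Nat.sub_add_cancel hsk]
      apply Nat.eq_of_mul_eq_mul_right hpos
      rw [← hall]
      ring
    exact Nat.eq_of_mul_eq_mul_left (by omega) hT
  · rintro ⟨i, hi⟩
    have hs2 : 2 ≤ s := by
      by_contra! hlt
      have h0 : s - 1 = 0 := by omega
      exact hi (by simp [h0])
    have hmaxsum : q * ∑ v : Fin k → Ideal.span ({γ} : Set R), wHom γ s q (∑ i, x i * v i) =
        q ^ (s * k - k) * ((q - 1) * q ^ (s - 1)) := by
      let f : (Fin k → Ideal.span ({γ} : Set R)) →ₗ[R] R :=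
        ∑ i, x i • (Submodule.subtype _).comp (LinearMap.proj i)
      have hfv : ∀ v, f v = ∑ i, x i * (v i : R) := fun v => by simp [f]
      have hf : f ≠ 0 := by
        intro hf0
        apply hi
        rw [← h.mul_eq_zero_iff]
        have := hfv (Pi.single i ⟨γ, Ideal.mem_span_singleton_self γ⟩)
        rw [hf0, LinearMap.zero_apply, Finset.sum_eq_single i] at this
        · simpa [mul_comm] using this.symm
        · intro j _ hj
          simp [hj]
        · simp
      have := h.mul_sum_wHom f hf
      simp only [hfv] at this
      rw [this, Nat.card_fun, h.card_maximalIdeal, Nat.card_fin, ← pow_mul, Nat.sub_mul, one_mul]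
    have hadd : q * T + q ^ (s * k - k) = q ^ (s * k) := by
      apply Nat.eq_of_mul_eq_mul_right hpos
      rw [← hall, ← hsum, mul_add, hmaxsum]
      ring
    have hsk : 2 * k ≤ s * k := Nat.mul_le_mul_right k hs2
    have hpow : q ^ (s * k) = q ^ (s * k - k) * q ^ k := by
      rw [← pow_add, Nat.sub_add_cancel (by omega)]
    apply Nat.eq_of_mul_eq_mul_left (show 0 < q by omega)
    rw [← mul_assoc, ← pow_succ', Nat.sub_add_cancel (by omega), Nat.mul_sub, mul_one, ← hpow]
    omega
end
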